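/- There is no primitive non-constant arithmetic progression of integers of the form $x_1^2, x_2^2, x_3^5, x_4^5$ (four terms, with exponent pattern $(2,2,5,5)$). -/

import Mathlib

/-!
With `c = x₃` and `d = x₄`, the progression gives `x₂² = 2 c⁵ - d⁵` with `c` and `d` coprime and, by
looking at `x₁²` modulo `8` as well, `c ≡ d ≡ 1` modulo `8`. This already forces `c = d`.

Let `K = ℚ(α)` with `α⁵ = 2`. Its ring of integers is principal with units of rank `2`, and the two
factors of `2 c⁵ - d⁵ = (α c - d) (α⁴ c⁴ + ⋯ + d⁴)` have no common prime factor other than the one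
above `5`. Hence each factor is a square up to `-1`, two fundamental units and `5`. These four
generators are `1 + α ^ l` to leading order for different `l` at the dyadic prime `(α)`, none of
which is the order of a dyadic square, so an element of this kind is a square as soon as it is one
modulo `α¹¹`. In particular `(α - 1) (s⁴ + s³ + s² + s + 1)` is a square for `s = α c / d`.

This quartic is birational to the elliptic curve `y² = x (x² - 5 (α - 1) x + 5 (α - 1)²)`, and if
`c ≠ d` then `s ≡ α` modulo `8` yields a point dyadically close to the origin. The test for squares
applies to both 2-isogenies through which multiplication by two factors, and shows that such a point
is twice another one. Each halving moves the point further from the origin, until `1 / x` is close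
to `4 α²`. The half of that point has `1 / x` known so precisely that the test identifies its
square class, and this class is incompatible with the real embedding of `K`.
-/

open Polynomial NumberField Module

section SquareClasses

variable {M : Type*} [CommMonoid M] {ι : Type*}

/-- Every element is a product of distinct members of the family `g` times a square. -/
def SpansModSquares (g : ι → M) : Prop :=
  ∀ x, ∃ (s : Finset ι) (y : M), x = (∏ i ∈ s, g i) * y ^ 2

/-- No nonempty product of distinct members of the family `g` is a square. -/
def IndependentModSquares (g : ι → M) : Prop :=
  ∀ s : Finset ι, IsSquare (∏ i ∈ s, g i) → s = ∅

lemma prod_mul_prod_eq_prod_symmDiff_mul_sq [DecidableEq ι] (g : ι → M) (s t : Finset ι) :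
    (∏ i ∈ s, g i) * ∏ i ∈ t, g i = (∏ i ∈ symmDiff s t, g i) * (∏ i ∈ s ∩ t, g i) ^ 2 := by
  have hdisj : Disjoint (symmDiff s t) (s ∩ t) := disjoint_symmDiff_inf s t
  have hunion : symmDiff s t ∪ s ∩ t = s ∪ t := symmDiff_sup_inf s t
  rw [← Finset.prod_union_inter, ← hunion, Finset.prod_union hdisj, sq, mul_assoc]

lemma IndependentModSquares.spansModSquares {G : Type*} [CommGroup G] {κ : Type*} [Fintype ι]
    [Fintype κ] {g : ι → G} {h : κ → G} (hg : IndependentModSquares g) (hh : SpansModSquares h)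
    (hcard : Fintype.card κ ≤ Fintype.card ι) : SpansModSquares g := by
  classical
  let Q := G ⧸ (powMonoidHom 2 : G →* G).range
  have mk_eq_mk (x y : G) : (x : Q) = y ↔ ∃ z, y = x * z ^ 2 := by
    simp only [QuotientGroup.eq, MonoidHom.mem_range, powMonoidHom_apply, eq_inv_mul_iff_mul_eq,
      eq_comm (a := y)]
  let gQ : Finset ι → Q := fun s => (∏ i ∈ s, g i : G)
  let hQ : Finset κ → Q := fun s => (∏ i ∈ s, h i : G)
  have hQ_surjective : hQ.Surjective := by
    intro q
    obtain ⟨x, rfl⟩ := QuotientGroup.mk_surjective q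
    obtain ⟨s, y, hy⟩ := hh x
    exact ⟨s, (mk_eq_mk _ _).2 ⟨y, hy⟩⟩
  have gQ_injective : gQ.Injective := by
    intro s t hst
    obtain ⟨z, hz⟩ := (mk_eq_mk _ _).1 hst
    have hprod := prod_mul_prod_eq_prod_symmDiff_mul_sq g s t
    refine symmDiff_eq_bot.1 (hg _ ⟨(∏ i ∈ s, g i) * z / ∏ i ∈ s ∩ t, g i, ?_⟩)
    rw [hz, ← mul_assoc, ← sq, ← mul_pow] at hprod
    rw [← sq, div_pow, hprod, mul_div_cancel_right]
  have : Finite Q := .of_surjective hQ hQ_surjective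
  have card_le : Nat.card Q ≤ Nat.card (Finset ι) := by
    refine (Nat.card_le_card_of_surjective hQ hQ_surjective).trans ?_
    simpa using Nat.pow_le_pow_right two_pos hcard
  intro x
  obtain ⟨s, hs⟩ := (gQ_injective.bijective_of_nat_card_le card_le).surjective (x : Q)
  obtain ⟨z, hz⟩ := (mk_eq_mk _ _).1 hs
  exact ⟨s, z, hz⟩

lemma exists_prod_zpow_eq_prod_mul_sq {G : Type*} [CommGroup G] [Fintype ι] (g : ι → G)
    (n : ι → ℤ) : ∃ (s : Finset ι) (y : G), ∏ i, g i ^ n i = (∏ i ∈ s, g i) * y ^ 2 := by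
  classical
  refine ⟨Finset.univ.filter fun i => Odd (n i), ∏ i, g i ^ (n i / 2), ?_⟩
  rw [Finset.prod_filter, ← Finset.prod_pow, ← Finset.prod_mul_distrib]
  refine Finset.prod_congr rfl fun i _ => ?_
  rcases Int.even_or_odd' (n i) with ⟨l, hl | hl⟩
  · have hdiv : n i / 2 = l := by omega
    rw [if_neg (by simp [hl]), one_mul, hdiv, hl, zpow_mul', zpow_ofNat]
  · have hdiv : n i / 2 = l := by omega
    rw [if_pos ⟨l, hl⟩, hdiv, hl, zpow_add_one, zpow_mul', zpow_ofNat, mul_comm]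

end SquareClasses

lemma spansModSquares_units {K : Type*} [Field K] [NumberField K] (hodd : Odd (finrank ℚ K)) :
    SpansModSquares fun i : Option (Fin (Units.rank K)) => i.elim (-1) (Units.fundSystem K) := by
  intro x
  obtain ⟨⟨ζ, n⟩, hx, -⟩ := Units.exist_unique_eq_mul_prod K x
  obtain ⟨s, y, hy⟩ := exists_prod_zpow_eq_prod_mul_sq (Units.fundSystem K) n
  rcases Units.torsion_eq_one_or_neg_one_of_odd_finrank hodd ζ with hζ | hζ
  · exact ⟨s.map .some, y, by simp [hx, hy, hζ]⟩
  · exact ⟨s.insertNone, y, by simp [hx, hy, hζ]⟩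

lemma isSquare_of_isSquare_sq_mul {R : Type*} [CommRing R] [IsDomain R] [IsIntegrallyClosed R]
    {x y : R} (hx : x ≠ 0) (h : IsSquare (x ^ 2 * y)) : IsSquare y := by
  obtain ⟨z, hz⟩ := h
  obtain ⟨w, rfl⟩ : x ∣ z :=
    (IsIntegrallyClosed.pow_dvd_pow_iff two_ne_zero).1 ⟨y, by rw [hz, sq]⟩
  exact ⟨w, mul_left_cancel₀ (pow_ne_zero 2 hx) (by rw [hz]; ring)⟩

lemma isSquare_of_isSquare_algebraMap {R S : Type*} [CommRing R] [IsDomain R]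
    [IsIntegrallyClosed R] [CommRing S] [Algebra R S] {M : Submonoid R} (hM : M ≤ nonZeroDivisors R)
    [IsLocalization M S] {x : R} (h : IsSquare (algebraMap R S x)) : IsSquare x := by
  obtain ⟨y, hy⟩ := h
  obtain ⟨⟨r, s⟩, hrs⟩ := IsLocalization.surj M y
  refine isSquare_of_isSquare_sq_mul (nonZeroDivisors.ne_zero (hM s.2))
    ⟨r, IsLocalization.injective S hM ?_⟩
  simp only [map_mul, map_pow, ← hrs, hy]
  ring

lemma exists_eq_unit_mul_pow_mul_sq {R : Type*} [CommRing R] [IsDomain R] [IsPrincipalIdealRing R]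
    {p A B : R} (hp : Prime p) (h0 : A * B ≠ 0) (hsq : IsSquare (A * B))
    (hAB : ∀ q, Prime q → q ∣ A → q ∣ B → q ∣ p) :
    ∃ (u : Rˣ) (m : ℕ) (t : R), A = u * p ^ m * t ^ 2 := by
  obtain ⟨S, hS⟩ := hsq
  have hS0 : S ≠ 0 := by rintro rfl; simp [hS] at h0
  obtain ⟨m, A', hA', rfl⟩ := WfDvdMonoid.max_power_factor (left_ne_zero_of_mul h0) hp.irreducible
  obtain ⟨n, B', hB', rfl⟩ := WfDvdMonoid.max_power_factor (right_ne_zero_of_mul h0) hp.irreducible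
  obtain ⟨k, S', hS', rfl⟩ := WfDvdMonoid.max_power_factor hS0 hp.irreducible
  have hmnk : m + n = 2 * k := by
    have hleft : emultiplicity p (p ^ m * A' * (p ^ n * B')) = (m + n : ℕ) := by
      simp [emultiplicity_mul hp, emultiplicity_pow_self hp.ne_zero hp.not_isUnit,
        emultiplicity_eq_zero.2 hA', emultiplicity_eq_zero.2 hB']
    have hright : emultiplicity p (p ^ k * S' * (p ^ k * S')) = (k + k : ℕ) := by
      simp [emultiplicity_mul hp, emultiplicity_pow_self hp.ne_zero hp.not_isUnit,
        emultiplicity_eq_zero.2 hS']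
    rw [hS, hright] at hleft
    have : k + k = m + n := by exact_mod_cast hleft
    omega
  have hsq' : A' * B' = S' ^ 2 := by
    apply mul_left_cancel₀ (pow_ne_zero (2 * k) hp.ne_zero)
    linear_combination hS - A' * B' * congrArg (p ^ ·) hmnk
  have hcoprime : IsCoprime A' B' := by
    refine isCoprime_of_prime_dvd (fun h => hA' (by simp [h.1])) fun q hq hqA hqB => hA' ?_
    have hqp := hAB q hq (hqA.mul_left _) (hqB.mul_left _)
    exact ((hq.dvd_prime_iff_associated hp).1 hqp).symm.dvd.trans hqA
  obtain ⟨t, u, htu⟩ := exists_associated_pow_of_mul_eq_pow' hcoprime hsq'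
  exact ⟨u, m, t, by rw [← htu]; ring⟩

lemma exists_isCoprime_fraction {R S : Type*} [CommRing R] [IsDomain R] [IsPrincipalIdealRing R]
    [CommRing S] [Algebra R S] (M : Submonoid R) [IsLocalization M S] (x : S) :
    ∃ p q : R, IsCoprime p q ∧ IsUnit (algebraMap R S q) ∧
      x * algebraMap R S q = algebraMap R S p := by
  classical
  let _ := IsBezout.toGCDDomain R
  obtain ⟨⟨n, s⟩, hx⟩ := IsLocalization.surj M x
  obtain ⟨p, q, hp, hq, hpq⟩ := extract_gcd n (s : R)
  have hs : IsUnit (algebraMap R S s) := IsLocalization.map_units S s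
  rw [hq, map_mul] at hs
  refine ⟨p, q, (gcd_isUnit_iff p q).1 hpq, isUnit_of_mul_isUnit_right hs,
    (isUnit_of_mul_isUnit_left hs).mul_left_cancel ?_⟩
  simp only at hx
  rw [mul_left_comm, ← map_mul, ← map_mul, ← hq, ← hp, hx]

/-- `π` behaves like an `e`-th root of `2` in a dyadic ring: it is a non-unit with `π ^ e = 2` and
`R / π` is the field with two elements. -/
structure IsDyadicUniformizer {R : Type*} [CommRing R] (π : R) (e : ℕ) : Prop where
  pow_eq_two : π ^ e = 2
  not_isUnit : ¬ IsUnit π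
  dvd_or_dvd_sub_one : ∀ x, π ∣ x ∨ π ∣ x - 1

/-- `x` is congruent to `1 + π ^ l` modulo `π ^ (l + 1)`. -/
def HasLevel {R : Type*} [CommRing R] (π : R) (l : ℕ) (x : R) : Prop :=
  π ^ (l + 1) ∣ x - (1 + π ^ l)

section HasLevel

variable {R : Type*} [CommRing R] {π : R}

lemma HasLevel.pow_dvd_sub_one {l : ℕ} {x : R} (h : HasLevel π l x) : π ^ l ∣ x - 1 := by
  have := ((pow_dvd_pow π l.le_succ).trans h).add (dvd_refl (π ^ l))
  rwa [show x - (1 + π ^ l) + π ^ l = x - 1 by ring] at this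

lemma HasLevel.mul_of_lt {l m : ℕ} {x y : R} (hx : HasLevel π l x) (hy : HasLevel π m y)
    (hlm : l < m) : HasLevel π l (x * y) := by
  have hy' : π ^ (l + 1) ∣ x * (y - 1) :=
    ((pow_dvd_pow π hlm).trans hy.pow_dvd_sub_one).mul_left x
  have := dvd_add hx hy'
  rwa [show x - (1 + π ^ l) + x * (y - 1) = x * y - (1 + π ^ l) by ring] at this

lemma exists_hasLevel_prod {ι : Type*} {g : ι → R} {l : ι → ℕ} (hg : ∀ i, HasLevel π (l i) (g i))
    (hl : l.Injective) {s : Finset ι} (hs : s.Nonempty) :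
    ∃ i, HasLevel π (l i) (∏ j ∈ s, g j) := by
  suffices ∃ i ∈ s, HasLevel π (l i) (∏ j ∈ s, g j) by
    obtain ⟨i, -, hi⟩ := this
    exact ⟨i, hi⟩
  induction hs using Finset.Nonempty.cons_induction with
  | singleton a => exact ⟨a, by simp, by simpa using hg a⟩
  | cons a s ha _ ih =>
    obtain ⟨i, his, hi⟩ := ih
    rw [Finset.prod_cons]
    rcases lt_or_gt_of_ne (hl.ne (ne_of_mem_of_not_mem his ha)) with h | h
    · exact ⟨i, by simp [his], by rw [mul_comm]; exact hi.mul_of_lt (hg a) h⟩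
    · exact ⟨a, by simp, (hg a).mul_of_lt hi h⟩

end HasLevel

namespace IsDyadicUniformizer

variable {R : Type*} [CommRing R] {π : R} {e : ℕ}

lemma not_dvd_one (hπ : IsDyadicUniformizer π e) : ¬ π ∣ 1 :=
  fun h => hπ.not_isUnit (isUnit_of_dvd_one h)

lemma isUnit_of_dvd_sub_one [IsLocalRing R] (hπ : IsDyadicUniformizer π e) {x : R}
    (h : π ∣ x - 1) : IsUnit x := by
  rw [← IsLocalRing.notMem_maximalIdeal]
  intro hx
  have hπ_mem : π ∈ IsLocalRing.maximalIdeal R := (IsLocalRing.mem_maximalIdeal π).2 hπ.not_isUnit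
  have := sub_mem hx (Ideal.mem_of_dvd _ h hπ_mem)
  rw [sub_sub_cancel] at this
  exact (IsLocalRing.maximalIdeal.isMaximal R).ne_top ((Ideal.eq_top_iff_one _).2 this)

lemma pow_dvd_four_mul (hπ : IsDyadicUniformizer π e) {x : R} (hx : π ∣ x) :
    π ^ (2 * e + 1) ∣ 4 * x := by
  have hfour : (4 : R) = π ^ (2 * e) := by rw [mul_comm, pow_mul, hπ.pow_eq_two]; norm_num
  rw [hfour, pow_succ]
  exact mul_dvd_mul_left _ hx

variable [CharZero R]

lemma dvd_two (hπ : IsDyadicUniformizer π e) : π ∣ 2 := by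
  rw [← hπ.pow_eq_two]
  refine dvd_pow_self π ?_
  rintro rfl
  simpa using hπ.pow_eq_two

lemma ne_zero (hπ : IsDyadicUniformizer π e) : π ≠ 0 := by
  rintro rfl
  simpa using hπ.dvd_two

lemma prime (hπ : IsDyadicUniformizer π e) : Prime π := by
  refine ⟨hπ.ne_zero, hπ.not_isUnit, fun x y h => or_iff_not_imp_left.2 fun hx => ?_⟩
  have hxy := h.sub (((hπ.dvd_or_dvd_sub_one x).resolve_left hx).mul_right y)
  rwa [show x * y - (x - 1) * y = y by ring] at hxy

variable [IsDomain R]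

lemma pow_dvd_of_pow_dvd_mul_add (hπ : IsDyadicUniformizer π e) {k : ℕ} (hk : k ≤ e) {y m : R}
    (h : π ^ (2 * k - 1) ∣ y * (y + 2 * m)) : π ^ k ∣ y := by
  induction k with
  | zero => simp
  | succ k ih =>
    obtain ⟨z, rfl⟩ := ih (by omega) ((pow_dvd_pow π (by omega)).trans h)
    obtain ⟨c, hc⟩ : π ^ (k + 1) ∣ 2 := hπ.pow_eq_two ▸ pow_dvd_pow π hk
    have hfactor : π ^ k * z * (π ^ k * z + 2 * m) = π ^ (2 * k) * (z * (z + π * (c * m))) := by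
      rw [hc]; ring
    rw [hfactor, show 2 * (k + 1) - 1 = 2 * k + 1 by omega, pow_succ,
      mul_dvd_mul_iff_left (pow_ne_zero _ hπ.ne_zero)] at h
    rw [pow_succ]
    refine mul_dvd_mul_left _ ?_
    rcases hπ.prime.dvd_or_dvd h with hz | hz
    · exact hz
    · exact (dvd_add_left (dvd_mul_right _ _)).1 hz

lemma pow_succ_dvd_sq_sub_one (hπ : IsDyadicUniformizer π e) {l : ℕ}
    (hl : l < 2 * e ∧ Odd l ∨ l = 2 * e) {z : R} (h : π ^ l ∣ z ^ 2 - 1) :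
    π ^ (l + 1) ∣ z ^ 2 - 1 := by
  have hfactor : z ^ 2 - 1 = (z - 1) * (z - 1 + 2 * 1) := by ring
  rw [hfactor] at h ⊢
  rcases hl with ⟨hle, k, rfl⟩ | rfl
  · have hz : π ^ (k + 1) ∣ z - 1 := hπ.pow_dvd_of_pow_dvd_mul_add (by omega) h
    have h2 : π ^ (k + 1) ∣ 2 * 1 := by
      rw [mul_one, ← hπ.pow_eq_two]
      exact pow_dvd_pow π (by omega)
    rw [show 2 * k + 1 + 1 = (k + 1) + (k + 1) by ring, pow_add]
    exact mul_dvd_mul hz (hz.add h2)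
  · obtain ⟨w, hw⟩ :=
      hπ.pow_dvd_of_pow_dvd_mul_add le_rfl ((pow_dvd_pow π (Nat.sub_le _ _)).trans h)
    have hprod : π ∣ w * (w + 1) := by
      rcases hπ.dvd_or_dvd_sub_one w with hw | hw
      · exact hw.mul_right _
      · have := hw.add hπ.dvd_two
        rw [show w - 1 + 2 = w + 1 by ring] at this
        exact this.mul_left _
    have : π ^ e * w * (π ^ e * w + 2 * 1) = π ^ (2 * e) * (w * (w + 1)) := by
      rw [← hπ.pow_eq_two]; ring
    rw [hw, this, pow_succ]
    exact mul_dvd_mul_left _ hprod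

lemma not_pow_dvd_sub_sq (hπ : IsDyadicUniformizer π e) {l : ℕ}
    (hl : l < 2 * e ∧ Odd l ∨ l = 2 * e) {x z : R} (hx : HasLevel π l x) :
    ¬ π ^ (2 * e + 1) ∣ x - z ^ 2 := by
  intro h
  have hle : l ≤ 2 * e := by omega
  have hz : π ^ l ∣ z ^ 2 - 1 := by
    have := hx.pow_dvd_sub_one.sub ((pow_dvd_pow π (by omega : l ≤ 2 * e + 1)).trans h)
    rwa [sub_sub_sub_cancel_left] at this
  have hpow : π ^ (l + 1) ∣ π ^ l * 1 := by
    have := ((hπ.pow_succ_dvd_sq_sub_one hl hz).add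
      ((pow_dvd_pow π (by omega : l + 1 ≤ 2 * e + 1)).trans h)).sub hx
    rwa [show z ^ 2 - 1 + (x - z ^ 2) - (x - (1 + π ^ l)) = π ^ l * 1 by ring] at this
  rw [pow_succ, mul_dvd_mul_iff_left (pow_ne_zero l hπ.ne_zero)] at hpow
  exact hπ.not_dvd_one hpow

lemma eq_empty_of_pow_dvd_prod_sub_sq (hπ : IsDyadicUniformizer π e) {ι : Type*} {g : ι → R}
    {l : ι → ℕ} (hg : ∀ i, HasLevel π (l i) (g i)) (hinj : l.Injective)
    (hl : ∀ i, l i < 2 * e ∧ Odd (l i) ∨ l i = 2 * e) {s : Finset ι} {z : R}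
    (h : π ^ (2 * e + 1) ∣ (∏ i ∈ s, g i) - z ^ 2) : s = ∅ := by
  by_contra hs
  obtain ⟨i, hi⟩ := exists_hasLevel_prod hg hinj (Finset.nonempty_iff_ne_empty.2 hs)
  exact hπ.not_pow_dvd_sub_sq (hl i) hi h

lemma exists_dvd_and_sq_add_mul_eq (hπ : IsDyadicUniformizer π e) {y m ω : R} (hω : π ∣ ω)
    (h : y ^ 2 = m ^ 2 + 4 * ω) : ∃ κ, π ∣ κ ∧ κ ^ 2 + m * κ = ω := by
  have hfactor : (y - m) * (y - m + 2 * m) = π ^ (2 * e) * ω := by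
    rw [mul_comm 2 e, pow_mul, hπ.pow_eq_two]
    linear_combination h
  obtain ⟨κ, hκ⟩ := hπ.pow_dvd_of_pow_dvd_mul_add le_rfl (m := m)
    ((pow_dvd_pow π (Nat.sub_le _ _)).trans ⟨ω, hfactor⟩)
  rw [hπ.pow_eq_two] at hκ
  have hroot : κ * (κ + m) = ω := by
    have h4 : (4 : R) ≠ 0 := by norm_num
    refine mul_left_cancel₀ h4 ?_
    linear_combination h - (y + m + 2 * κ) * hκ
  rcases hπ.prime.dvd_or_dvd (hroot ▸ hω) with hdvd | hdvd
  · exact ⟨κ, hdvd, by rw [← hroot]; ring⟩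
  · exact ⟨-(κ + m), hdvd.neg_right, by rw [← hroot]; ring⟩

end IsDyadicUniformizer

section PrimeDegree

variable {F K : Type*} [Field F] [Field K] [Algebra F K] {p : ℕ} {γ : K} {r e : F}

lemma minpoly_of_sub_pow_eq (hp : p.Prime) (he : ∀ b, b ^ p ≠ e)
    (h : (γ - algebraMap F K r) ^ p = algebraMap F K e) :
    minpoly F γ = (X - C r) ^ p - C e := by
  have hshift : X ^ p - C e = minpoly F (γ - algebraMap F K r) :=
    minpoly.eq_of_irreducible_of_monic (X_pow_sub_C_irreducible_of_prime hp he) (by simp [h])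
      (monic_X_pow_sub_C e hp.ne_zero)
  have := minpoly.add_algebraMap (γ - algebraMap F K r) r
  rw [sub_add_cancel, ← hshift] at this
  simpa using this

lemma adjoin_eq_top_of_sub_pow_eq (hp : p.Prime) (hK : finrank F K = p) (he : ∀ b, b ^ p ≠ e)
    (h : (γ - algebraMap F K r) ^ p = algebraMap F K e) : IntermediateField.adjoin F {γ} = ⊤ := by
  have : FiniteDimensional F K := .of_finrank_pos (hK ▸ hp.pos)
  rw [Field.primitive_element_iff_minpoly_natDegree_eq, minpoly_of_sub_pow_eq hp he h, hK,
    natDegree_sub_C, natDegree_pow, natDegree_X_sub_C, mul_one]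

lemma algebra_adjoin_eq_top_of_sub_pow_eq (hp : p.Prime) (hK : finrank F K = p)
    (he : ∀ b, b ^ p ≠ e) (h : (γ - algebraMap F K r) ^ p = algebraMap F K e) :
    Algebra.adjoin F {γ} = ⊤ := by
  have : FiniteDimensional F K := .of_finrank_pos (hK ▸ hp.pos)
  rw [← IntermediateField.adjoin_simple_toSubalgebra_of_isAlgebraic
    (Algebra.IsAlgebraic.isAlgebraic _), adjoin_eq_top_of_sub_pow_eq hp hK he h,
    IntermediateField.top_toSubalgebra]

lemma norm_of_sub_pow_eq (hp : p.Prime) (hodd : Odd p) (hK : finrank F K = p)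
    (he : ∀ b, b ^ p ≠ e) (h : (γ - algebraMap F K r) ^ p = algebraMap F K e) :
    Algebra.norm F γ = r ^ p + e := by
  have : FiniteDimensional F K := .of_finrank_pos (hK ▸ hp.pos)
  have hint : IsIntegral F γ := Algebra.IsIntegral.isIntegral γ
  have hdegree : finrank (IntermediateField.adjoin F {γ}) K = 1 := by
    rw [adjoin_eq_top_of_sub_pow_eq hp hK he h, IntermediateField.finrank_top]
  rw [Algebra.norm_eq_norm_adjoin, hdegree, pow_one, ← IntermediateField.adjoin.powerBasis_gen hint,
    Algebra.PowerBasis.norm_gen_eq_coeff_zero_minpoly, IntermediateField.adjoin.powerBasis_dim,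
    IntermediateField.adjoin.powerBasis_gen, IntermediateField.minpoly_gen,
    minpoly_of_sub_pow_eq hp he h, natDegree_sub_C, natDegree_pow, natDegree_X_sub_C,
    coeff_zero_eq_eval_zero]
  simp [hodd.neg_one_pow, hodd.neg_pow]
  ring

end PrimeDegree

lemma absNorm_span_of_sub_pow_eq {K : Type*} [Field K] [NumberField K] {p : ℕ} (hp : p.Prime)
    (hodd : Odd p) (hK : finrank ℚ K = p) {γ : 𝓞 K} {r e : ℤ} (he : ∀ b : ℚ, b ^ p ≠ e)
    (h : (γ - r) ^ p = e) : Ideal.absNorm (Ideal.span {γ}) = (r ^ p + e).natAbs := by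
  have hcoe : ((γ : K) - algebraMap ℚ K r) ^ p = algebraMap ℚ K e := by
    simpa using congrArg (algebraMap (𝓞 K) K) h
  have hnorm := norm_of_sub_pow_eq hp hodd hK he hcoe
  rw [← Algebra.coe_norm_int] at hnorm
  rw [Ideal.absNorm_span_singleton]
  exact congrArg Int.natAbs (by exact_mod_cast hnorm)

section PrimeRadical

variable {K : Type*} [Field K] [NumberField K] {p : ℕ} {α : 𝓞 K} {a : ℤ}

lemma discr_dvd_of_pow_eq (hp : p.Prime) (hodd : Odd p) (hK : finrank ℚ K = p)
    (ha : ∀ b : ℚ, b ^ p ≠ a) (hα : α ^ p = a) : discr K ∣ p ^ p * a ^ (p - 1) := by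
  have hcoe : ((α : K) - algebraMap ℚ K 0) ^ p = algebraMap ℚ K a := by
    simpa using congrArg (algebraMap (𝓞 K) K) hα
  have hadjoin := algebra_adjoin_eq_top_of_sub_pow_eq hp hK ha hcoe
  have hminpoly : minpoly ℤ α = X ^ p - C a := by
    apply Polynomial.map_injective (algebraMap ℤ ℚ) (algebraMap ℤ ℚ).injective_int
    rw [← minpoly.isIntegrallyClosed_eq_field_fractions ℚ K
      (Algebra.IsIntegral.isIntegral (R := ℤ) α), minpoly_of_sub_pow_eq hp ha hcoe]
    simp
  have hmem := aeval_derivative_mem_differentIdeal ℤ ℚ K α hadjoin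
  have hderiv : aeval α (derivative (X ^ p - C a)) = p * α ^ (p - 1) := by
    simp [derivative_X_pow]
  have hnorm : Ideal.absNorm (Ideal.span {(p * α ^ (p - 1) : 𝓞 K)}) =
      (p ^ p * a ^ (p - 1)).natAbs := by
    have hα_norm := absNorm_span_of_sub_pow_eq hp hodd hK (r := 0) ha (by simpa using hα)
    have hp_norm : Algebra.norm ℤ (p : 𝓞 K) = p ^ p := by
      simpa [RingOfIntegers.rank, hK] using Algebra.norm_algebraMap (S := 𝓞 K) (p : ℤ)
    rw [Ideal.absNorm_span_singleton] at hα_norm ⊢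
    simp [hp_norm, Int.natAbs_mul, Int.natAbs_pow, hα_norm, hp.ne_zero]
  rw [hminpoly, hderiv] at hmem
  rw [← Int.natAbs_dvd_natAbs, ← absNorm_differentIdeal K (𝓞 K), ← hnorm]
  exact Ideal.absNorm_dvd_absNorm_of_le ((Ideal.span_singleton_le_iff_mem _).2 hmem)

lemma nrRealPlaces_of_pow_eq (hp : p.Prime) (hodd : Odd p) (hK : finrank ℚ K = p)
    (ha : ∀ b : ℚ, b ^ p ≠ a) (hα : α ^ p = a) : InfinitePlace.nrRealPlaces K = 1 := by
  refine le_antisymm ?_ (InfinitePlace.nrRealPlaces_pos_of_odd_finrank (hK ▸ hodd))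
  classical
  have hcoe : (α : K) ^ p = a := by simpa using congrArg (algebraMap (𝓞 K) K) hα
  have hadjoin := algebra_adjoin_eq_top_of_sub_pow_eq hp hK (γ := (α : K)) (r := 0) ha
    (by simpa using hcoe)
  rw [← InfinitePlace.card_real_embeddings, Fintype.card_le_one_iff_subsingleton]
  refine ⟨fun φ ψ => Subtype.ext ?_⟩
  have apply_eq (χ : {φ : K →+* ℂ // ComplexEmbedding.IsReal φ}) :
      ∃ x : ℝ, (x : ℂ) = χ.1 α ∧ x ^ p = a :=
    ⟨χ.2.embedding α, by simp, by rw [← map_pow, hcoe, map_intCast]⟩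
  obtain ⟨x, hx, hxp⟩ := apply_eq φ
  obtain ⟨y, hy, hyp⟩ := apply_eq ψ
  have hxy : x = y := hodd.strictMono_pow.injective (hxp.trans hyp.symm)
  have : φ.1.toRatAlgHom = ψ.1.toRatAlgHom := by
    refine AlgHom.ext_of_adjoin_eq_top hadjoin fun z hz => ?_
    simp [Set.mem_singleton_iff.1 hz, ← hx, ← hy, hxy]
  ext x
  exact DFunLike.congr_fun this x

end PrimeRadical

lemma eq_of_pow_eq_pow_of_coprime {F : Type*} [GroupWithZero F] [Finite F] {k : ℕ} (hk0 : k ≠ 0)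
    (hk : (Nat.card F - 1).Coprime k) {x y : F} (h : x ^ k = y ^ k) : x = y := by
  rcases eq_or_ne x 0 with rfl | hx
  · rw [zero_pow hk0, eq_comm, pow_eq_zero_iff hk0] at h
    exact h.symm
  have hy : y ≠ 0 := by
    rintro rfl
    exact hx ((pow_eq_zero_iff hk0).1 (h.trans (zero_pow hk0)))
  rw [← Nat.card_units] at hk
  have := (powCoprime hk).injective (a₁ := Units.mk0 x hx) (a₂ := Units.mk0 y hy)
    (Units.ext (by simpa using h))
  simpa using congrArg Units.val this

lemma exists_prime_dvd_card_and_natCast_eq_zero (F : Type*) [Field F] [Finite F] :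
    ∃ p : ℕ, p.Prime ∧ p ∣ Nat.card F ∧ (p : F) = 0 := by
  have := Fintype.ofFinite F
  obtain ⟨p, _⟩ := CharP.exists F
  obtain ⟨n, hp, hcard⟩ := FiniteField.card F p
  refine ⟨p, hp, ?_, CharP.cast_eq_zero F p⟩
  rw [Nat.card_eq_fintype_card, hcard]
  exact dvd_pow_self p n.ne_zero

lemma residue_of_pow_five_eq_two {F : Type*} [Field F] [Finite F] (h : Nat.card F ≤ 13) {a : F}
    (ha : a ^ 5 = 2) :
    a = 0 ∨ a + 1 = 0 ∨ a ^ 2 + 1 = 0 ∨ a ^ 3 - 1 = 0 ∨ 2 * a ^ 3 - 3 = 0 := by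
  have := Fintype.ofFinite F
  have hpp : IsPrimePow (Nat.card F) :=
    Nat.card_eq_fintype_card (α := F) ▸ FiniteField.isPrimePow_card F
  have hzero : (Nat.card F : F) = 0 := by simp
  have hpow : a ^ Nat.card F = a := by simp [FiniteField.pow_card]
  have h11 : Nat.card F ≠ 11 := by
    intro h11
    rw [h11] at hzero hpow
    have ha3 : 3 * a = 0 := by linear_combination hpow - a * (a ^ 5 + 2) * ha
    have hone : (4 * 3 : F) = 1 := by linear_combination hzero
    have ha0 : a = 0 := by linear_combination 4 * ha3 - a * hone
    rw [ha0] at ha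
    exact one_ne_zero (α := F) (by linear_combination hzero + 5 * ha)
  have eq_of_pow (b : F) (hb : b ^ 5 = 2) : a = b := by
    refine eq_of_pow_eq_pow_of_coprime (by norm_num) ?_ (ha.trans hb.symm)
    generalize Nat.card F = q at *
    interval_cases q <;> first | decide | (revert hpp; decide) | contradiction
  have hprime : (2 : F) = 0 ∨ (3 : F) = 0 ∨ (5 : F) = 0 ∨ (7 : F) = 0 ∨ (13 : F) = 0 := by
    obtain ⟨p, hp, hdvd, hp0⟩ := exists_prime_dvd_card_and_natCast_eq_zero F
    have hle : p ≤ 13 := (Nat.le_of_dvd Nat.card_pos hdvd).trans h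
    have hp11 : p ≠ 11 := by
      rintro rfl
      have := Nat.card_pos (α := F)
      omega
    have hp_cases : p = 2 ∨ p = 3 ∨ p = 5 ∨ p = 7 ∨ p = 13 := by
      interval_cases p <;> first | omega | norm_num at hp
    rcases hp_cases with rfl | rfl | rfl | rfl | rfl <;> simp only [Nat.cast_ofNat] at hp0 <;> tauto
  rcases hprime with h | h | h | h | h
  · exact .inl (eq_of_pow 0 (by linear_combination -h))
  · exact .inr (.inl (by rw [eq_of_pow (-1) (by linear_combination -h)]; ring))
  · exact .inr (.inr (.inl (by
      rw [eq_of_pow 2 (by linear_combination 6 * h)]; linear_combination h)))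
  · exact .inr (.inr (.inr (.inl (by
      rw [eq_of_pow 4 (by linear_combination 146 * h)]; linear_combination 9 * h))))
  · exact .inr (.inr (.inr (.inr (by
      rw [eq_of_pow 6 (by linear_combination 598 * h)]; linear_combination 33 * h))))

lemma exists_numberField_pow_eq {p : ℕ} (hp : p.Prime) {a : ℤ} (ha : ∀ b : ℚ, b ^ p ≠ a) :
    ∃ (K : Type) (_ : Field K) (_ : NumberField K) (α : 𝓞 K), finrank ℚ K = p ∧ α ^ p = a := by
  obtain ⟨f, hf⟩ : ∃ f : ℚ[X], f = X ^ p - C (a : ℚ) := ⟨_, rfl⟩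
  have : Fact (Irreducible f) := ⟨hf ▸ X_pow_sub_C_irreducible_of_prime hp ha⟩
  let B := AdjoinRoot.powerBasis (Fact.out : Irreducible f).ne_zero
  have := B.finite
  have : NumberField (AdjoinRoot f) := ⟨⟩
  have hroot : AdjoinRoot.root f ^ p = a := by
    have := AdjoinRoot.eval₂_root f
    simp only [hf, eval₂_sub, eval₂_X_pow, eval₂_C, sub_eq_zero] at this
    rw [this, map_intCast]
  have hint : IsIntegral ℤ (AdjoinRoot.root f) :=
    .of_pow hp.pos (hroot ▸ isIntegral_algebraMap (x := a))
  obtain ⟨α, hα⟩ := (IsIntegralClosure.isIntegral_iff (A := 𝓞 (AdjoinRoot f))).1 hint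
  refine ⟨AdjoinRoot f, inferInstance, this, α, ?_, RingOfIntegers.coe_injective ?_⟩
  · rw [B.finrank, AdjoinRoot.powerBasis_dim, hf, natDegree_X_pow_sub_C]
  · rw [map_pow, hα, hroot, map_intCast]

lemma rat_pow_ne_prime_pow {p : ℕ} [Fact p.Prime] {k n : ℕ} (h : ¬ k ∣ n) (b : ℚ) :
    b ^ k ≠ (p : ℚ) ^ n := by
  intro hb
  have := congrArg (padicValRat p) hb
  rw [padicValRat.pow, padicValRat.pow, padicValRat.self (Fact.out : p.Prime).one_lt,
    mul_one] at this
  exact h (Int.natCast_dvd_natCast.1 ⟨_, this.symm⟩)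

section PrimeAbsNorm

variable {R : Type*} [CommRing R] [IsDedekindDomain R] [Module.Free ℤ R]

lemma prime_of_prime_absNorm_span {g : R} (h : (Ideal.absNorm (Ideal.span {g})).Prime) :
    Prime g := by
  have hg : g ≠ 0 := by
    rintro rfl
    simp [Nat.not_prime_zero] at h
  exact (Ideal.span_singleton_prime hg).1 (Ideal.isPrime_of_irreducible_absNorm h)

lemma isPrincipal_of_mem_of_prime_absNorm {P : Ideal R} [P.IsPrime] {g : R} (hg : g ∈ P)
    (h : (Ideal.absNorm (Ideal.span {g})).Prime) : P.IsPrincipal := by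
  have hprime := prime_of_prime_absNorm_span h
  have hmax : (Ideal.span {g}).IsMaximal :=
    ((Ideal.span_singleton_prime hprime.ne_zero).2 hprime).isMaximal (by simp [hprime.ne_zero])
  exact ⟨g, (hmax.eq_of_le Ideal.IsPrime.ne_top' ((Ideal.span_singleton_le_iff_mem _).2 hg)).symm⟩

lemma isDyadicUniformizer_of_absNorm_eq_two {π : R} {e : ℕ} (hπ : π ^ e = 2)
    (h : Ideal.absNorm (Ideal.span {π}) = 2) : IsDyadicUniformizer π e := by
  have hprime : Prime π := prime_of_prime_absNorm_span (h ▸ Nat.prime_two)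
  have hcard : Nat.card (R ⧸ Ideal.span {π}) = 2 := by
    rwa [Ideal.absNorm_apply, Submodule.cardQuot_apply] at h
  have mk_eq_zero (x : R) : Ideal.Quotient.mk (Ideal.span {π}) x = 0 ↔ π ∣ x := by
    rw [Ideal.Quotient.eq_zero_iff_mem, Ideal.mem_span_singleton]
  have hone : (1 : R ⧸ Ideal.span {π}) ≠ 0 := fun h1 =>
    hprime.not_isUnit (isUnit_of_dvd_one ((mk_eq_zero 1).1 (by simpa using h1)))
  refine ⟨hπ, hprime.not_isUnit, fun x => or_iff_not_imp_left.2 fun hx => ?_⟩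
  obtain ⟨y, -, hy⟩ := (Nat.card_eq_two_iff' (0 : R ⧸ Ideal.span {π})).1 hcard
  rw [← mk_eq_zero, map_sub, map_one, sub_eq_zero, hy 1 hone]
  exact hy _ (mt (mk_eq_zero x).1 hx)

end PrimeAbsNorm

section FifthRoot

variable {K : Type*} [Field K] [NumberField K] {α : 𝓞 K}

lemma rat_pow_five_ne_two (b : ℚ) : b ^ 5 ≠ (2 : ℤ) := by
  simpa using rat_pow_ne_prime_pow (p := 2) (n := 1) (by norm_num : ¬ 5 ∣ 1) b

lemma absNorm_span_eq_of_sub_pow_five_eq_two_pow (hK : finrank ℚ K = 5) {γ : 𝓞 K} {n : ℕ}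
    (hn : ¬ 5 ∣ n) (r : ℤ) (h : (γ - r) ^ 5 = 2 ^ n) :
    Ideal.absNorm (Ideal.span {γ}) = (r ^ 5 + 2 ^ n).natAbs :=
  absNorm_span_of_sub_pow_eq (by norm_num) (by decide) hK
    (fun b => by simpa using rat_pow_ne_prime_pow (p := 2) hn b) (by simpa using h)

lemma isPrincipal_of_absNorm_le_thirteen (hK : finrank ℚ K = 5) (hα : α ^ 5 = 2)
    {P : Ideal (𝓞 K)} [hP : P.IsPrime] (h : Ideal.absNorm P ≤ 13) : P.IsPrincipal := by
  by_cases h0 : P = ⊥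
  · exact h0 ▸ bot_isPrincipal
  have hmax : P.IsMaximal := hP.isMaximal h0
  let _ : Field (𝓞 K ⧸ P) := Ideal.Quotient.field P
  have : Finite (𝓞 K ⧸ P) := Ideal.finiteQuotientOfFreeOfNeBot P h0
  rw [Ideal.absNorm_apply, Submodule.cardQuot_apply] at h
  have principal (γ : 𝓞 K) (hγ : Ideal.Quotient.mk P γ = 0) {n : ℕ} (r : ℤ) (hn : ¬ 5 ∣ n)
      (he : (γ - r) ^ 5 = 2 ^ n) (hp : (r ^ 5 + 2 ^ n).natAbs.Prime) : P.IsPrincipal :=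
    isPrincipal_of_mem_of_prime_absNorm (Ideal.Quotient.eq_zero_iff_mem.1 hγ)
      (absNorm_span_eq_of_sub_pow_five_eq_two_pow hK hn r he ▸ hp)
  have hα' : (Ideal.Quotient.mk P α) ^ 5 = 2 := by rw [← map_pow, hα, map_ofNat]
  rcases residue_of_pow_five_eq_two h hα' with h | h | h | h | h
  · exact principal α h (n := 1) 0 (by norm_num) (by linear_combination hα) (by norm_num)
  · exact principal (α + 1) (by simpa using h) (n := 1) 1 (by norm_num)
      (by push_cast; linear_combination hα) (by norm_num)
  · exact principal (α ^ 2 + 1) (by simpa using h) (n := 2) 1 (by norm_num)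
      (by push_cast; linear_combination (α ^ 5 + 2) * hα) (by norm_num)
  · exact principal (α ^ 3 - 1) (by simpa using h) (n := 3) (-1) (by norm_num)
      (by push_cast; linear_combination (α ^ 10 + 2 * α ^ 5 + 4) * hα) (by norm_num)
  · exact principal (2 * α ^ 3 - 3)
      (by simpa only [map_sub, map_mul, map_pow, map_ofNat] using h) (n := 8) (-3) (by norm_num)
      (by push_cast; linear_combination 32 * (α ^ 10 + 2 * α ^ 5 + 4) * hα) (by norm_num)

lemma abs_discr_le (hK : finrank ℚ K = 5) (hα : α ^ 5 = 2) : |discr K| ≤ 50000 := by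
  have := discr_dvd_of_pow_eq (by norm_num) (by decide) hK rat_pow_five_ne_two (by simpa using hα)
  exact Int.le_of_dvd (by norm_num) ((abs_dvd _ _).2 (by simpa using this))

lemma minkowski_bound_lt_fourteen (hK : finrank ℚ K = 5) (hα : α ^ 5 = 2) :
    (4 / Real.pi) ^ InfinitePlace.nrComplexPlaces K *
      ((finrank ℚ K).factorial / (finrank ℚ K : ℝ) ^ finrank ℚ K * √|discr K|) < 14 := by
  have hcomplex : InfinitePlace.nrComplexPlaces K ≤ 2 := by
    have := InfinitePlace.card_add_two_mul_card_eq_rank K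
    omega
  have hsqrt : √|discr K| ≤ 224 := by
    have : (|discr K| : ℝ) ≤ 50000 := by exact_mod_cast abs_discr_le hK hα
    rw [Real.sqrt_le_left (by norm_num)]
    linarith
  have one_le : 1 ≤ 4 / Real.pi := by
    rw [le_div_iff₀ Real.pi_pos]
    linarith [Real.pi_le_four]
  have le_bound : 4 / Real.pi ≤ 1.274 := by
    rw [div_le_iff₀ Real.pi_pos]
    linarith [Real.pi_gt_d4]
  rw [hK]
  calc (4 / Real.pi) ^ InfinitePlace.nrComplexPlaces K *
        ((Nat.factorial 5 : ℝ) / (5 : ℕ) ^ 5 * √|discr K|)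
      ≤ 1.274 ^ 2 * ((Nat.factorial 5 : ℝ) / (5 : ℕ) ^ 5 * 224) := by
        gcongr
        exact (pow_le_pow_right₀ one_le hcomplex).trans (by gcongr)
    _ < 14 := by norm_num [Nat.factorial]

lemma isPrincipalIdealRing_of_fifth_root (hK : finrank ℚ K = 5) (hα : α ^ 5 = 2) :
    IsPrincipalIdealRing (𝓞 K) := by
  apply RingOfIntegers.isPrincipalIdealRing_of_isPrincipal_of_norm_le_of_isPrime
  intro I hI hle
  have hlt : (Ideal.absNorm (I : Ideal (𝓞 K)) : ℝ) < 14 :=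
    hle.trans_lt (by exact_mod_cast minkowski_bound_lt_fourteen hK hα)
  exact isPrincipal_of_absNorm_le_thirteen hK hα (Nat.le_of_lt_succ (by exact_mod_cast hlt))

lemma rank_of_fifth_root (hK : finrank ℚ K = 5) (hα : α ^ 5 = 2) : Units.rank K = 2 := by
  have hreal := nrRealPlaces_of_pow_eq (by norm_num) (by decide) hK rat_pow_five_ne_two
    (by simpa using hα)
  have hrank := InfinitePlace.card_add_two_mul_card_eq_rank K
  have hcard := InfinitePlace.card_eq_nrRealPlaces_add_nrComplexPlaces K
  rw [Units.rank]
  omega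

lemma isDyadicUniformizer_fifth_root (hK : finrank ℚ K = 5) (hα : α ^ 5 = 2) :
    IsDyadicUniformizer α 5 := by
  refine isDyadicUniformizer_of_absNorm_eq_two hα ?_
  rw [absNorm_span_eq_of_sub_pow_five_eq_two_pow hK (n := 1) (by norm_num) 0
    (by simpa using hα)]
  norm_num

lemma prime_one_add_fifth_root_sq (hK : finrank ℚ K = 5) (hα : α ^ 5 = 2) : Prime (1 + α ^ 2) := by
  refine prime_of_prime_absNorm_span ?_
  rw [absNorm_span_eq_of_sub_pow_five_eq_two_pow hK (n := 2) (by norm_num) 1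
    (by push_cast; linear_combination (α ^ 5 + 2) * hα)]
  norm_num

end FifthRoot

section SelmerGenerators

/-- Units generating, modulo squares, the unit group of the ring of integers of `ℚ(π)` when `π` is
a fifth root of `2`; they are chosen to lie in distinct steps of the filtration by `π ^ l`. -/
def unitGen {R : Type*} [CommRing R] (π : R) : Fin 3 → R :=
  ![-1, 1 - π, (1 - π) ^ 3 * (1 + π + π ^ 3)]

/-- The family `unitGen π` together with `5`, which is the only ramified odd prime of `ℚ(π)`. -/
def selmerGen {R : Type*} [CommRing R] (π : R) (i : Option (Fin 3)) : R :=
  i.elim 5 (unitGen π)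

/-- The exponents `l` such that `selmerGen π i` is congruent to `1 + π ^ l` modulo `π ^ (l + 1)`. -/
def selmerLevel (i : Option (Fin 3)) : ℕ :=
  i.elim 10 ![5, 1, 3]

variable {R : Type*} [CommRing R] {π : R}

lemma isUnit_one_sub_fifth_root (hπ : π ^ 5 = 2) : IsUnit (1 - π) :=
  .of_mul_eq_one (-(1 + π + π ^ 2 + π ^ 3 + π ^ 4)) (by linear_combination hπ)

lemma isUnit_one_add_fifth_root_add_cube (hπ : π ^ 5 = 2) : IsUnit (1 + π + π ^ 3) :=
  .of_mul_eq_one (1 - π - π ^ 2 + π ^ 4) (by linear_combination π ^ 2 * hπ)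

lemma isUnit_unitGen (hπ : π ^ 5 = 2) (i : Fin 3) : IsUnit (unitGen π i) := by
  fin_cases i
  · exact isUnit_one.neg
  · exact isUnit_one_sub_fifth_root hπ
  · exact ((isUnit_one_sub_fifth_root hπ).pow 3).mul (isUnit_one_add_fifth_root_add_cube hπ)

lemma exists_unit_mul_five_eq (hπ : π ^ 5 = 2) : ∃ w : Rˣ, w * 5 = (1 + π ^ 2) ^ 5 := by
  have hw : (1 + 4 * π + π ^ 2 + 2 * π ^ 3 + 2 * π ^ 4) *
      (-3 - 6 * π - π ^ 2 + 4 * π ^ 3 + 3 * π ^ 4) = 1 := by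
    linear_combination (2 + 9 * π + 14 * π ^ 2 + 6 * π ^ 3) * hπ
  refine ⟨.mkOfMulEqOne _ _ hw, ?_⟩
  rw [Units.val_mkOfMulEqOne]
  linear_combination -(10 * π + 5 * π ^ 3 + 2 + π ^ 5) * hπ

lemma hasLevel_selmerGen (hπ : π ^ 5 = 2) :
    ∀ i, HasLevel π (selmerLevel i) (selmerGen π i)
  | none => ⟨0, by
      change (5 : R) - (1 + π ^ 10) = _
      linear_combination -(π ^ 5 + 2) * hπ⟩
  | some 0 => ⟨-π ^ 4, by
      change (-1 : R) - (1 + π ^ 5) = π ^ 6 * -π ^ 4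
      linear_combination (π ^ 5 + 1) * hπ⟩
  | some 1 => ⟨-π ^ 4, by
      change (1 - π) - (1 + π ^ 1) = π ^ 2 * -π ^ 4
      linear_combination π * hπ⟩
  | some 2 => ⟨-4 + 3 * π - 2 * π ^ 2 + π ^ 4, by
      change (1 - π) ^ 3 * (1 + π + π ^ 3) - (1 + π ^ 3) = π ^ 4 * _
      linear_combination (π - π ^ 3) * hπ⟩

lemma map_selmerGen {S : Type*} [CommRing S] (f : R →+* S) (i : Option (Fin 3)) :
    f (selmerGen π i) = selmerGen (f π) i := by
  rcases i with _ | i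
  · simp only [selmerGen, Option.elim_none, map_ofNat]
  · fin_cases i <;> simp [selmerGen, unitGen]

lemma eq_empty_of_pow_dvd_prod_selmerGen_sub_sq [CharZero R] [IsDomain R]
    (hπ : IsDyadicUniformizer π 5) {s : Finset (Option (Fin 3))} {z : R}
    (h : π ^ 11 ∣ (∏ i ∈ s, selmerGen π i) - z ^ 2) : s = ∅ := by
  refine hπ.eq_empty_of_pow_dvd_prod_sub_sq (hasLevel_selmerGen hπ.pow_eq_two) ?_ ?_ h <;>
    decide

end SelmerGenerators

section FifthRoot

variable {K : Type*} [Field K] [NumberField K] {α : 𝓞 K}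

lemma exists_unit_eq_prod_unitGen_mul_sq (hK : finrank ℚ K = 5) (hα : α ^ 5 = 2) (u : (𝓞 K)ˣ) :
    ∃ (s : Finset (Fin 3)) (y : 𝓞 K), (u : 𝓞 K) = (∏ i ∈ s, unitGen α i) * y ^ 2 := by
  choose g hg using isUnit_unitGen hα
  have hspan := spansModSquares_units (K := K) (hK ▸ by decide)
  have hcard : Fintype.card (Option (Fin (Units.rank K))) ≤ Fintype.card (Fin 3) := by
    simp [rank_of_fifth_root hK hα]
  have hind : IndependentModSquares g := by
    rintro s ⟨z, hz⟩
    have hprod : ∏ i ∈ s.map .some, selmerGen α i = (z : 𝓞 K) ^ 2 := by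
      simpa [selmerGen, ← hg, sq] using congrArg Units.val hz
    simpa using eq_empty_of_pow_dvd_prod_selmerGen_sub_sq (isDyadicUniformizer_fifth_root hK hα)
      (s := s.map .some) (z := z) (by simp [hprod])
  obtain ⟨s, y, hy⟩ := hind.spansModSquares hspan hcard u
  exact ⟨s, y, by simp [hy, hg]⟩

lemma exists_sq_mul_eq_prod_selmerGen_mul_sq (hK : finrank ℚ K = 5) (hα : α ^ 5 = 2)
    {A B : 𝓞 K} (h0 : A * B ≠ 0) (hsq : IsSquare (A * B))
    (hAB : ∀ q, Prime q → q ∣ A → q ∣ B → q ∣ 5) :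
    ∃ (s : Finset (Option (Fin 3))) (r t : 𝓞 K),
      ¬ α ∣ r ∧ r ^ 2 * A = (∏ i ∈ s, selmerGen α i) * t ^ 2 := by
  have hα_prime := (isDyadicUniformizer_fifth_root hK hα).prime
  have := isPrincipalIdealRing_of_fifth_root hK hα
  obtain ⟨w, hw⟩ := exists_unit_mul_five_eq hα
  obtain ⟨u, m, t, rfl⟩ := exists_eq_unit_mul_pow_mul_sq (prime_one_add_fifth_root_sq hK hα) h0 hsq
    fun q hq hqA hqB => hq.dvd_of_dvd_pow (hw ▸ (hAB q hq hqA hqB).mul_left _)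
  rcases Nat.even_or_odd' m with ⟨k, rfl | rfl⟩
  · obtain ⟨s, y, hy⟩ := exists_unit_eq_prod_unitGen_mul_sq hK hα u
    refine ⟨s.map .some, 1, y * (1 + α ^ 2) ^ k * t, hα_prime.not_dvd_one, ?_⟩
    simp only [hy, Finset.prod_map, Function.Embedding.some_apply, selmerGen, Option.elim_some]
    ring
  · obtain ⟨s, y, hy⟩ := exists_unit_eq_prod_unitGen_mul_sq hK hα (u * w)
    refine ⟨s.insertNone, (1 + α ^ 2) ^ 2, y * (1 + α ^ 2) ^ k * t, fun h => ?_, ?_⟩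
    · refine hα_prime.not_dvd_one ((dvd_add_left (dvd_pow_self α two_ne_zero)).1 ?_)
      exact hα_prime.dvd_of_dvd_pow h
    · rw [Units.val_mul] at hy
      simp only [Finset.prod_insertNone, selmerGen, Option.elim_none, Option.elim_some]
      linear_combination (5 * (1 + α ^ 2) ^ (2 * k) * t ^ 2) * hy -
        u * (1 + α ^ 2) ^ (2 * k) * t ^ 2 * hw

end FifthRoot

section LocalGlobal

variable {K : Type*} [Field K] [NumberField K] {W : Type*} [CommRing W] [Algebra (𝓞 K) W]

/-- `K` is the field generated by a fifth root `α` of `2`, the ring `W` is a localization of its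
ring of integers, and the image `π` of `α` in `W` still has residue field with two elements. It is
applied to the localization at the prime `(α)`. -/
structure IsDyadicLocalization (α : 𝓞 K) (π : W) : Prop where
  finrank_eq_five : finrank ℚ K = 5
  pow_eq_two : α ^ 5 = 2
  algebraMap_eq : algebraMap (𝓞 K) W α = π
  exists_isLocalization : ∃ M ≤ nonZeroDivisors (𝓞 K), IsLocalization M W
  isDyadicUniformizer : IsDyadicUniformizer π 5

namespace IsDyadicLocalization

variable {α : 𝓞 K} {π : W}

lemma isIntegrallyClosed [IsDomain W] (hW : IsDyadicLocalization α π) : IsIntegrallyClosed W := by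
  obtain ⟨M, hM, _⟩ := hW.exists_isLocalization
  exact isIntegrallyClosed_of_isLocalization W M hM

lemma isSquare_of_pow_dvd_sub_sq [CharZero W] [IsDomain W] [IsLocalRing W]
    (hW : IsDyadicLocalization α π) {A B : 𝓞 K} {w : W} (hw : IsUnit w)
    (h0 : A * B ≠ 0) (hsq : IsSquare (A * B)) (hAB : ∀ q, Prime q → q ∣ A → q ∣ B → q ∣ 5)
    (h : π ^ 11 ∣ algebraMap (𝓞 K) W A - w ^ 2) : IsSquare A := by
  obtain ⟨hK, hα, rfl, -, hπ⟩ := hW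
  set φ := algebraMap (𝓞 K) W
  obtain ⟨s, r, t, hr, hA⟩ := exists_sq_mul_eq_prod_selmerGen_mul_sq hK hα h0 hsq hAB
  have isUnit_map {x : 𝓞 K} (hx : ¬ α ∣ x) : IsUnit (φ x) := by
    have := ((isDyadicUniformizer_fifth_root hK hα).dvd_or_dvd_sub_one x).resolve_left hx
    exact hπ.isUnit_of_dvd_sub_one (by simpa using map_dvd φ this)
  have hcongr : φ α ^ 11 ∣ (∏ i ∈ s, selmerGen (φ α) i) * φ t ^ 2 - (φ r * w) ^ 2 := by
    have hφA := congrArg φ hA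
    simp only [map_mul, map_pow, map_prod, map_selmerGen] at hφA
    rw [← hφA, mul_pow, ← mul_sub]
    exact h.mul_left _
  have ht : IsUnit (φ t) := by
    refine isUnit_map fun hαt => hπ.not_isUnit ?_
    have hdvd : φ α ∣ (φ r * w) ^ 2 :=
      (dvd_sub_right (((map_dvd φ hαt).trans (dvd_pow_self _ two_ne_zero)).mul_left _)).1
        ((dvd_pow_self _ (by norm_num)).trans hcongr)
    exact isUnit_of_dvd_unit hdvd (((isUnit_map hr).mul hw).pow 2)
  have hs : s = ∅ := by
    obtain ⟨i, hi⟩ := ht.exists_right_inv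
    refine eq_empty_of_pow_dvd_prod_selmerGen_sub_sq hπ (z := φ r * w * i) ?_
    have := hcongr.mul_right (i ^ 2)
    rwa [sub_mul, mul_assoc, ← mul_pow, ← mul_pow, hi, one_pow, mul_one] at this
  rw [hs, Finset.prod_empty, one_mul] at hA
  have hr0 : r ≠ 0 := fun h0 => hr (h0 ▸ dvd_zero α)
  exact isSquare_of_isSquare_sq_mul hr0 ⟨t, by rw [hA, sq]⟩

end IsDyadicLocalization

end LocalGlobal

section QuadFactor

variable {W : Type*} [CommRing W]

/-- The polynomial `1 + a X + b X²`: the factor `x² + a x + b` of the equation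
`y² = x (x² + a x + b)` in the coordinate `X = 1 / x`, up to the square `X²`. -/
def quadFactor (a b X : W) : W :=
  1 + a * X + b * X ^ 2

/-- `X = 1 / x` for the abscissa `x` of a point of the elliptic curve `y² = x (x² + a x + b)`. -/
def IsAbscissa (a b X : W) : Prop :=
  IsSquare (X * quadFactor a b X)

variable [CharZero W] [IsDomain W] [IsLocalRing W] {π : W} {e : ℕ}

/- The curve with parameters `(-2 a, a² - 4 b)` is 2-isogenous to the one with parameters `(a, b)`;
this produces a preimage under the isogeny. -/
lemma IsDyadicUniformizer.exists_isUnit_quadFactor_mul_eq (hπ : IsDyadicUniformizer π e)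
    {a b ν : W} (hν : π ∣ ν) (h : IsSquare (quadFactor (-2 * a) (a ^ 2 - 4 * b) ν)) :
    ∃ l, IsUnit l ∧ quadFactor a b (ν * l) = l := by
  obtain ⟨y, hy⟩ := h
  obtain ⟨κ, hκ, hroot⟩ := hπ.exists_dvd_and_sq_add_mul_eq (y := y) (m := 1 - a * ν)
    (ω := -(b * ν ^ 2)) ((hν.pow two_ne_zero).mul_left b).neg_right
    (by rw [quadFactor] at hy; linear_combination -hy)
  have hunit : IsUnit (1 - a * ν + κ) := hπ.isUnit_of_dvd_sub_one <| by
    convert hκ.sub (hν.mul_left a) using 1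
    ring
  obtain ⟨l, hl⟩ := hunit.exists_right_inv
  refine ⟨l, .of_mul_eq_one_right _ hl, ?_⟩
  rw [quadFactor]
  linear_combination l ^ 2 * hroot + (-((1 - a * ν + κ) * l + 1) - a * ν * l + l) * hl

end QuadFactor

lemma prime_dvd_of_dvd_mul_of_dvd_quadForm {R : Type*} [CommRing R] {p q a b r : R}
    (hpq : IsCoprime p q) (hr : Prime r) (hC : r ∣ q ^ 2 + a * p * q + b * p ^ 2)
    (h : r ∣ p * q) : r ∣ b := by
  have not_both (hp : r ∣ p) (hq : r ∣ q) : False := hr.not_isUnit (hpq.isUnit_of_dvd' hp hq)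
  rcases hr.dvd_or_dvd h with hp | hq
  · have := hC.sub (hp.mul_right (a * q + b * p))
    rw [show q ^ 2 + a * p * q + b * p ^ 2 - p * (a * q + b * p) = q ^ 2 by ring] at this
    exact (not_both hp (hr.dvd_of_dvd_pow this)).elim
  · have := hC.sub (hq.mul_right (q + a * p))
    rw [show q ^ 2 + a * p * q + b * p ^ 2 - q * (q + a * p) = b * p ^ 2 by ring] at this
    exact (hr.dvd_or_dvd this).resolve_right fun hp => not_both (hr.dvd_of_dvd_pow hp) hq

namespace IsDyadicLocalization

variable {K : Type*} [Field K] [NumberField K] {W : Type*} [CommRing W] [Algebra (𝓞 K) W]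
  [CharZero W] [IsDomain W] [IsLocalRing W] {α : 𝓞 K} {π : W}

lemma isSquare_unit_mul_quadForm (hW : IsDyadicLocalization α π) {a b p q : 𝓞 K}
    (hb : ∀ r, Prime r → r ∣ b → r ∣ 5) (hpq : IsCoprime p q) (g : (𝓞 K)ˣ)
    (h0 : p * q * (q ^ 2 + a * p * q + b * p ^ 2) ≠ 0)
    (hsq : IsSquare (p * q * (q ^ 2 + a * p * q + b * p ^ 2))) {w : W} (hw : IsUnit w)
    (h : π ^ 11 ∣ algebraMap (𝓞 K) W (g * (q ^ 2 + a * p * q + b * p ^ 2)) - w ^ 2) :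
    IsSquare (g * (q ^ 2 + a * p * q + b * p ^ 2)) := by
  have hprod : (g * (q ^ 2 + a * p * q + b * p ^ 2)) * (g * (p * q)) =
      (g : 𝓞 K) ^ 2 * (p * q * (q ^ 2 + a * p * q + b * p ^ 2)) := by ring
  refine hW.isSquare_of_pow_dvd_sub_sq (B := g * (p * q)) hw ?_ ?_ (fun r hr hrC hrpq => ?_) h
  · rw [hprod]
    exact mul_ne_zero (g.isUnit.pow 2).ne_zero h0
  · rw [hprod]
    exact (IsSquare.sq _).mul hsq
  · rw [Units.dvd_mul_left] at hrC hrpq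
    exact hb r hr (prime_dvd_of_dvd_mul_of_dvd_quadForm hpq hr hrC hrpq)

lemma isSquare_unit_mul_quadFactor_and_isSquare_unit_mul (hW : IsDyadicLocalization α π)
    {a b : 𝓞 K} (hb : ∀ r, Prime r → r ∣ b → r ∣ 5) {X w : W} (hX : X ≠ 0)
    (hsq : IsAbscissa (algebraMap (𝓞 K) W a) (algebraMap (𝓞 K) W b) X) (g : (𝓞 K)ˣ)
    (hw : IsUnit w) (h : π ^ 11 ∣ algebraMap (𝓞 K) W g *
      quadFactor (algebraMap (𝓞 K) W a) (algebraMap (𝓞 K) W b) X - w ^ 2) :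
    IsSquare (algebraMap (𝓞 K) W g *
      quadFactor (algebraMap (𝓞 K) W a) (algebraMap (𝓞 K) W b) X) ∧
    IsSquare (algebraMap (𝓞 K) W g * X) := by
  have := isPrincipalIdealRing_of_fifth_root hW.finrank_eq_five hW.pow_eq_two
  have := hW.isIntegrallyClosed
  obtain ⟨M, hM, _⟩ := hW.exists_isLocalization
  obtain ⟨p, q, hpq, hq, hXq⟩ := exists_isCoprime_fraction M X
  set φ := algebraMap (𝓞 K) W
  set D := quadFactor (φ a) (φ b) X with hD
  have hD0 : D ≠ 0 := by
    intro h0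
    rw [h0, mul_zero, zero_sub, dvd_neg] at h
    exact hW.isDyadicUniformizer.not_isUnit
      (isUnit_of_dvd_unit ((dvd_pow_self π (by norm_num)).trans h) (hw.pow 2))
  have hform : φ (q ^ 2 + a * p * q + b * p ^ 2) = φ q ^ 2 * D := by
    simp only [hD, quadFactor, map_add, map_mul, map_pow, ← hXq]
    ring
  have hunit_form : φ (g * (q ^ 2 + a * p * q + b * p ^ 2)) = φ q ^ 2 * (φ g * D) := by
    rw [map_mul, hform, mul_left_comm]
  have hprod : φ (p * q * (q ^ 2 + a * p * q + b * p ^ 2)) = (φ q ^ 2) ^ 2 * (X * D) := by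
    rw [map_mul, map_mul, hform, ← hXq]
    ring
  have hform_sq := hW.isSquare_unit_mul_quadForm hb hpq g
    (by
      rw [← map_ne_zero_iff φ (IsLocalization.injective W hM), hprod]
      exact mul_ne_zero ((hq.pow 2).pow 2).ne_zero (mul_ne_zero hX hD0))
    (isSquare_of_isSquare_algebraMap hM (by rw [hprod]; exact (IsSquare.sq _).mul hsq))
    (hq.mul hw) (by rw [hunit_form, mul_pow, ← mul_sub]; exact h.mul_left _)
  have hgD : IsSquare (φ g * D) :=
    isSquare_of_isSquare_sq_mul hq.ne_zero (hunit_form ▸ hform_sq.map φ)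
  refine ⟨hgD, isSquare_of_isSquare_sq_mul hD0 ?_⟩
  have := hgD.mul hsq
  rwa [show φ g * D * (X * D) = D ^ 2 * (φ g * X) by ring] at this

lemma isSquare_quadFactor_and_isSquare (hW : IsDyadicLocalization α π)
    {a b : 𝓞 K} (hb : ∀ r, Prime r → r ∣ b → r ∣ 5) {X w : W} (hX : X ≠ 0)
    (hsq : IsAbscissa (algebraMap (𝓞 K) W a) (algebraMap (𝓞 K) W b) X) (hw : IsUnit w)
    (h : π ^ 11 ∣ quadFactor (algebraMap (𝓞 K) W a) (algebraMap (𝓞 K) W b) X - w ^ 2) :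
    IsSquare (quadFactor (algebraMap (𝓞 K) W a) (algebraMap (𝓞 K) W b) X) ∧ IsSquare X := by
  simpa using
    hW.isSquare_unit_mul_quadFactor_and_isSquare_unit_mul hb hX hsq 1 hw (by simpa using h)

lemma exists_isAbscissa_of_isAbscissa_four_mul (hW : IsDyadicLocalization α π) {a b : 𝓞 K}
    (hb : ∀ r, Prime r → r ∣ b → r ∣ 5) {μ : W} (hμ : π ∣ μ) (hμ0 : μ ≠ 0)
    (hsq : IsAbscissa (algebraMap (𝓞 K) W a) (algebraMap (𝓞 K) W b) (4 * μ)) :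
    ∃ i, IsUnit i ∧
      quadFactor (algebraMap (𝓞 K) W (-2 * a)) (algebraMap (𝓞 K) W (a ^ 2 - 4 * b)) (μ * i) = i ∧
      IsAbscissa (algebraMap (𝓞 K) W (-2 * a)) (algebraMap (𝓞 K) W (a ^ 2 - 4 * b)) (μ * i) := by
  have hπ := hW.isDyadicUniformizer
  have := hW.isIntegrallyClosed
  set A := algebraMap (𝓞 K) W a
  set B := algebraMap (𝓞 K) W b
  simp only [map_sub, map_mul, map_pow, map_neg, map_ofNat]
  obtain ⟨hD, h4μ⟩ := hW.isSquare_quadFactor_and_isSquare hb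
    (mul_ne_zero (by norm_num) hμ0) hsq isUnit_one <| by
      convert hπ.pow_dvd_four_mul (hμ.mul_right (A + 4 * B * μ)) using 1
      rw [quadFactor]
      ring
  have hμ_sq : IsSquare μ := isSquare_of_isSquare_sq_mul two_ne_zero
    (by rwa [show (2 : W) ^ 2 * μ = 4 * μ by ring])
  obtain ⟨i, hi, hiD⟩ := hπ.exists_isUnit_quadFactor_mul_eq (a := -2 * A) (b := A ^ 2 - 4 * B)
    hμ (by convert hD using 1; rw [quadFactor, quadFactor]; ring)
  refine ⟨i, hi, hiD, ?_⟩
  rw [IsAbscissa, hiD, mul_assoc, ← sq]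
  exact hμ_sq.mul (.sq i)

lemma exists_isAbscissa_of_isAbscissa_isogenous (hW : IsDyadicLocalization α π) {a b : 𝓞 K}
    (hb : ∀ r, Prime r → r ∣ a ^ 2 - 4 * b → r ∣ 5) {ν : W} (hν : π ∣ ν) (hν0 : ν ≠ 0)
    (hsq : IsAbscissa (algebraMap (𝓞 K) W (-2 * a)) (algebraMap (𝓞 K) W (a ^ 2 - 4 * b)) ν) :
    ∃ l, IsUnit l ∧ quadFactor (algebraMap (𝓞 K) W a) (algebraMap (𝓞 K) W b) (ν * l) = l ∧
      IsAbscissa (algebraMap (𝓞 K) W a) (algebraMap (𝓞 K) W b) (ν * l) := by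
  have hπ := hW.isDyadicUniformizer
  set A := algebraMap (𝓞 K) W a with hA
  set B := algebraMap (𝓞 K) W b with hB
  have hunit : IsUnit (1 - A * ν) := hπ.isUnit_of_dvd_sub_one <| by
    convert (hν.mul_left A).neg_right using 1
    ring
  obtain ⟨hD, hν_sq⟩ := hW.isSquare_quadFactor_and_isSquare hb hν0 hsq hunit <| by
    simp only [map_sub, map_mul, map_pow, map_neg, map_ofNat, ← hA, ← hB]
    convert hπ.pow_dvd_four_mul (hν.mul_right (-B * ν)) using 1
    rw [quadFactor]
    ring
  simp only [map_sub, map_mul, map_pow, map_neg, map_ofNat] at hD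
  obtain ⟨l, hl, hlD⟩ := hπ.exists_isUnit_quadFactor_mul_eq hν hD
  refine ⟨l, hl, hlD, ?_⟩
  rw [IsAbscissa, hlD, mul_assoc, ← sq]
  exact hν_sq.mul (.sq l)

/- A point close enough to the origin is twice a point: it lifts through both of the 2-isogenies
that factor multiplication by two. -/
lemma exists_isAbscissa_half (hW : IsDyadicLocalization α π) {a b : 𝓞 K}
    (hb : ∀ r, Prime r → r ∣ b → r ∣ 5) (hb' : ∀ r, Prime r → r ∣ a ^ 2 - 4 * b → r ∣ 5) {μ : W}
    (hμ : π ∣ μ) (hμ0 : μ ≠ 0)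
    (hsq : IsAbscissa (algebraMap (𝓞 K) W a) (algebraMap (𝓞 K) W b) (4 * μ)) :
    ∃ v, IsAbscissa (algebraMap (𝓞 K) W a) (algebraMap (𝓞 K) W b) (μ * v) ∧
      v * quadFactor (algebraMap (𝓞 K) W a) (algebraMap (𝓞 K) W b) (μ * v) =
        (1 - algebraMap (𝓞 K) W b * (μ * v) ^ 2) ^ 2 := by
  obtain ⟨i, hi, hiD, hi_sq⟩ := hW.exists_isAbscissa_of_isAbscissa_four_mul hb hμ hμ0 hsq
  obtain ⟨l, -, hlD, hl_sq⟩ := hW.exists_isAbscissa_of_isAbscissa_isogenous hb' (hμ.mul_right i)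
    (mul_ne_zero hμ0 hi.ne_zero) hi_sq
  refine ⟨i * l, by rwa [← mul_assoc], ?_⟩
  rw [← mul_assoc, hlD]
  simp only [quadFactor, map_sub, map_mul, map_pow, map_neg, map_ofNat] at hiD hlD
  set A := algebraMap (𝓞 K) W a
  set B := algebraMap (𝓞 K) W b
  linear_combination -l ^ 2 * hiD - (l - A * (μ * i * l) + 1 + B * (μ * i * l) ^ 2) * hlD

end IsDyadicLocalization

lemma nonempty_ringHom_real_of_odd_finrank {K : Type*} [Field K] [NumberField K]
    (hK : Odd (finrank ℚ K)) {W : Type*} [CommRing W] [Algebra (𝓞 K) W] {M : Submonoid (𝓞 K)}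
    (hM : M ≤ nonZeroDivisors (𝓞 K)) [IsLocalization M W] : Nonempty (W →+* ℝ) := by
  classical
  obtain ⟨v, hv⟩ := Fintype.card_pos_iff.1 (InfinitePlace.nrRealPlaces_pos_of_odd_finrank hK)
  let ψ : 𝓞 K →+* ℝ := (InfinitePlace.embedding_of_isReal hv).comp (algebraMap (𝓞 K) K)
  have hψ : Function.Injective ψ :=
    (InfinitePlace.embedding_of_isReal hv).injective.comp (FaithfulSMul.algebraMap_injective _ _)
  exact ⟨IsLocalization.lift (M := M) (g := ψ) fun y =>
    ((map_ne_zero_iff ψ hψ).2 (nonZeroDivisors.ne_zero (hM y.2))).isUnit⟩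

lemma not_isSquare_mul_quadFactor_of_ringHom_real {W : Type*} [CommRing W] (φ : W →+* ℝ)
    {g a b X : W} (hg : φ g < 0) (ha : φ a ≤ 0) (hb : 0 ≤ φ b) (hX : IsSquare (g * X)) :
    ¬ IsSquare (g * quadFactor a b X) := by
  intro hD
  have hφX : φ X ≤ 0 := nonpos_of_mul_nonneg_right (by simpa using (hX.map φ).nonneg) hg
  have hφD : φ (quadFactor a b X) ≤ 0 :=
    nonpos_of_mul_nonneg_right (by simpa using (hD.map φ).nonneg) hg
  simp only [quadFactor, map_add, map_mul, map_pow, map_one] at hφD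
  have haX := mul_nonneg_of_nonpos_of_nonpos ha hφX
  have hbX := mul_nonneg hb (sq_nonneg (φ X))
  linarith

section Halving

variable {W : Type*} [CommRing W]

lemma dvd_quadFactor_sub_quadFactor {d X Y : W} (a b : W) (h : d ∣ X - Y) :
    d ∣ quadFactor a b X - quadFactor a b Y := by
  convert h.mul_right (a + b * (X + Y)) using 1
  simp only [quadFactor]
  ring

lemma dvd_sub_one_of_half {a b d τ κ X : W} (hX : d ∣ X) (hτ : d ∣ τ - 1)
    (h : κ * quadFactor a b X = τ * (1 - b * X ^ 2) ^ 2) : d ∣ κ - 1 := by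
  have := hτ.add (hX.mul_right (τ * b * X * (b * X ^ 2 - 2) - κ * (a + b * X)))
  rw [quadFactor] at h
  convert this using 1
  linear_combination h

namespace IsDyadicUniformizer

variable [IsLocalRing W] {π : W} {e : ℕ}

lemma dvd_sub_of_dvd_add_mul_eval_sub (hπ : IsDyadicUniformizer π e) (F : W[X]) {d x y : W}
    (h : d ∣ (x + π * F.eval x) - (y + π * F.eval y)) : d ∣ x - y := by
  obtain ⟨c, hc⟩ := F.sub_dvd_eval_sub x y
  have hunit : IsUnit (1 + π * c) := hπ.isUnit_of_dvd_sub_one (by simp)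
  refine hunit.dvd_mul_right.1 ?_
  convert h using 1
  linear_combination -π * hc

lemma dvd_sub_of_dvd_half_sub (hπ : IsDyadicUniformizer π e) (a b : W) {d x y : W}
    (h : d ∣ (x * quadFactor a b (π ^ 2 * x) - (1 - b * (π ^ 2 * x) ^ 2) ^ 2) -
      (y * quadFactor a b (π ^ 2 * y) - (1 - b * (π ^ 2 * y) ^ 2) ^ 2)) : d ∣ x - y := by
  refine hπ.dvd_sub_of_dvd_add_mul_eval_sub (C (a * π + 2 * b * π ^ 3) * X ^ 2 +
    C (b * π ^ 3) * X ^ 3 - C (b ^ 2 * π ^ 7) * X ^ 4) ?_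
  convert h using 1
  simp only [quadFactor, eval_add, eval_sub, eval_mul, eval_C, eval_pow, eval_X]
  ring

/- By the duplication formula, `h` says that a point with `X = π² κ` doubles to one with
`X = 4 π² τ`. -/
lemma pow_dvd_sub_of_half (hπ : IsDyadicUniformizer π 5) {τ κ : W} (hτ : π ^ 9 ∣ τ - 1)
    (h : κ * quadFactor (-5 * (π - 1)) (5 * (π - 1) ^ 2) (π ^ 2 * κ) =
      τ * (1 - 5 * (π - 1) ^ 2 * (π ^ 2 * κ) ^ 2) ^ 2) :
    π ^ 9 ∣ κ - (1 + 2 * π - π ^ 2 - π ^ 3 + π ^ 4) := by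
  refine hπ.dvd_sub_of_dvd_half_sub (-5 * (π - 1)) (5 * (π - 1) ^ 2) (dvd_sub ?_ ?_)
  · rw [h]
    convert hτ.mul_right ((1 - 5 * (π - 1) ^ 2 * (π ^ 2 * κ) ^ 2) ^ 2) using 1
    ring
  · refine ⟨7933 - 21205 * π + 6843 * π ^ 2 - 739 * π ^ 3 + 4891 * π ^ 4, ?_⟩
    rw [quadFactor]
    linear_combination (-1 * π - 2 * π ^ 2 - 7 * π ^ 3 - 3 * π ^ 4 + 17 * π ^ 6 + 59 * π ^ 7 -
      51 * π ^ 8 + 3905 * π ^ 9 - 10560 * π ^ 10 + 3110 * π ^ 11 - 125 * π ^ 12 + 3855 * π ^ 13 +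
      600 * π ^ 14 - 8050 * π ^ 15 + 5500 * π ^ 16 + 2050 * π ^ 17 - 4150 * π ^ 18 +
      1500 * π ^ 19 + 500 * π ^ 20 - 600 * π ^ 21 + 200 * π ^ 22 - 25 * π ^ 23) * hπ.pow_eq_two

lemma pow_dvd_quadFactor_sub_of_half (hπ : IsDyadicUniformizer π 5) {τ κ : W}
    (hτ : π ^ 9 ∣ τ - 1) (h : κ * quadFactor (-5 * (π - 1)) (5 * (π - 1) ^ 2) (π ^ 2 * κ) =
      τ * (1 - 5 * (π - 1) ^ 2 * (π ^ 2 * κ) ^ 2) ^ 2) :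
    π ^ 11 ∣ quadFactor (-5 * (π - 1)) (5 * (π - 1) ^ 2) (π ^ 2 * κ) -
      (1 - π) * (1 + π + π ^ 3) * (1 + π ^ 2) ^ 2 := by
  have hκ : π ^ 11 ∣ π ^ 2 * κ - π ^ 2 * (1 + 2 * π - π ^ 2 - π ^ 3 + π ^ 4) := by
    rw [← mul_sub, show π ^ 11 = π ^ 2 * π ^ 9 by ring]
    exact mul_dvd_mul_left _ (hπ.pow_dvd_sub_of_half hτ h)
  rw [← sub_add_sub_cancel]
  refine (dvd_quadFactor_sub_quadFactor _ _ hκ).add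
    ⟨24 + 3 * π + 14 * π ^ 2 + 8 * π ^ 3 - 33 * π ^ 4, ?_⟩
  rw [quadFactor]
  linear_combination (-2 * π ^ 2 - 2 * π ^ 3 + 4 * π ^ 4 - 4 * π ^ 5 + 6 * π ^ 6 + 17 * π ^ 7 -
    34 * π ^ 8 - 3 * π ^ 9 + 33 * π ^ 10) * hπ.pow_eq_two

end IsDyadicUniformizer

end Halving

namespace IsDyadicLocalization

variable {K : Type*} [Field K] [NumberField K] {W : Type*} [CommRing W] [Algebra (𝓞 K) W]
  {α : 𝓞 K} {π : W}

lemma dvd_five_of_dvd_five_mul_sq (hW : IsDyadicLocalization α π) {r : 𝓞 K}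
    (h : r ∣ 5 * (α - 1) ^ 2) : r ∣ 5 := by
  have hunit := (isUnit_one_sub_fifth_root hW.pow_eq_two).neg
  rw [neg_sub] at hunit
  exact (hunit.pow 2).dvd_mul_right.1 h

lemma nonempty_ringHom_real (hW : IsDyadicLocalization α π) : Nonempty (W →+* ℝ) := by
  obtain ⟨M, hM, _⟩ := hW.exists_isLocalization
  exact nonempty_ringHom_real_of_odd_finrank (hW.finrank_eq_five ▸ by decide) hM

lemma one_lt_map (hW : IsDyadicLocalization α π) (φ : W →+* ℝ) : 1 < φ π := by
  have hφ : φ π ^ 5 = 2 := by rw [← map_pow, hW.isDyadicUniformizer.pow_eq_two, map_ofNat]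
  have hmono : StrictMono fun x : ℝ => x ^ 5 := Odd.strictMono_pow (by decide)
  exact hmono.lt_iff_lt.1 (by norm_num [hφ])

variable [CharZero W] [IsDomain W] [IsLocalRing W]

lemma isSquare_mul_of_half (hW : IsDyadicLocalization α π) {τ κ : W} (hτ : π ^ 9 ∣ τ - 1)
    (h : κ * quadFactor (-5 * (π - 1)) (5 * (π - 1) ^ 2) (π ^ 2 * κ) =
      τ * (1 - 5 * (π - 1) ^ 2 * (π ^ 2 * κ) ^ 2) ^ 2)
    (hsq : IsAbscissa (-5 * (π - 1)) (5 * (π - 1) ^ 2) (π ^ 2 * κ)) :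
    IsSquare ((1 - π) * (1 + π + π ^ 3) *
      quadFactor (-5 * (π - 1)) (5 * (π - 1) ^ 2) (π ^ 2 * κ)) ∧
    IsSquare ((1 - π) * (1 + π + π ^ 3) * (π ^ 2 * κ)) := by
  have hπ := hW.isDyadicUniformizer
  have hκ : κ ≠ 0 := by
    rintro rfl
    rw [zero_mul, mul_zero, zero_pow two_ne_zero, mul_zero, sub_zero, one_pow, mul_one] at h
    rw [← h, zero_sub, dvd_neg] at hτ
    exact hπ.not_dvd_one ((dvd_pow_self π (by norm_num)).trans hτ)
  obtain ⟨g, hg⟩ := (isUnit_one_sub_fifth_root hW.pow_eq_two).mul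
    (isUnit_one_add_fifth_root_add_cube hW.pow_eq_two)
  have hgW : algebraMap (𝓞 K) W g = (1 - π) * (1 + π + π ^ 3) := by
    simp only [hg, map_mul, map_sub, map_add, map_pow, map_one, hW.algebraMap_eq]
  have hw : IsUnit (1 + π ^ 2) :=
    hπ.isUnit_of_dvd_sub_one (by simp)
  have hD := (hπ.pow_dvd_quadFactor_sub_of_half hτ h).mul_left (algebraMap (𝓞 K) W g)
  rw [mul_sub, ← mul_assoc (algebraMap (𝓞 K) W g), ← hgW, ← sq, ← mul_pow] at hD
  have := hW.isSquare_unit_mul_quadFactor_and_isSquare_unit_mul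
    (a := -5 * (α - 1)) (b := 5 * (α - 1) ^ 2) (X := π ^ 2 * κ)
    (w := algebraMap (𝓞 K) W g * (1 + π ^ 2))
    (fun r _ => hW.dvd_five_of_dvd_five_mul_sq) (mul_ne_zero (pow_ne_zero 2 hπ.ne_zero) hκ)
  simp only [map_sub, map_mul, map_pow, map_neg, map_ofNat, map_one, hW.algebraMap_eq] at this
  exact hgW ▸ this hsq g ((g.isUnit.map _).mul hw) hD

lemma not_isAbscissa_of_half (hW : IsDyadicLocalization α π) {τ κ : W} (hτ : π ^ 9 ∣ τ - 1)
    (h : κ * quadFactor (-5 * (π - 1)) (5 * (π - 1) ^ 2) (π ^ 2 * κ) =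
      τ * (1 - 5 * (π - 1) ^ 2 * (π ^ 2 * κ) ^ 2) ^ 2) :
    ¬ IsAbscissa (-5 * (π - 1)) (5 * (π - 1) ^ 2) (π ^ 2 * κ) := by
  intro hsq
  obtain ⟨hgD, hgX⟩ := hW.isSquare_mul_of_half hτ h hsq
  obtain ⟨φ⟩ := hW.nonempty_ringHom_real
  have hφπ := hW.one_lt_map φ
  refine not_isSquare_mul_quadFactor_of_ringHom_real φ ?_ ?_ ?_ hgX hgD
  · simp only [map_sub, map_mul, map_add, map_pow, map_one]
    exact mul_neg_of_neg_of_pos (by linarith) (by positivity)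
  · simp only [map_sub, map_mul, map_neg, map_ofNat, map_one]
    linarith
  · simp only [map_sub, map_mul, map_pow, map_ofNat, map_one]
    positivity

lemma exists_half (hW : IsDyadicLocalization α π) (j : ℕ) {τ : W} (hτ : π ∣ τ - 1)
    (hsq : IsAbscissa (-5 * (π - 1)) (5 * (π - 1) ^ 2) (4 ^ (j + 1) * π ^ 2 * τ)) :
    ∃ κ, IsAbscissa (-5 * (π - 1)) (5 * (π - 1) ^ 2) (4 ^ j * π ^ 2 * κ) ∧
      κ * quadFactor (-5 * (π - 1)) (5 * (π - 1) ^ 2) (4 ^ j * π ^ 2 * κ) =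
        τ * (1 - 5 * (π - 1) ^ 2 * (4 ^ j * π ^ 2 * κ) ^ 2) ^ 2 := by
  have hπ := hW.isDyadicUniformizer
  have hμ0 : 4 ^ j * π ^ 2 * τ ≠ 0 :=
    mul_ne_zero (mul_ne_zero (pow_ne_zero _ (by norm_num)) (pow_ne_zero 2 hπ.ne_zero))
      (hπ.isUnit_of_dvd_sub_one hτ).ne_zero
  have := hW.exists_isAbscissa_half (a := -5 * (α - 1)) (b := 5 * (α - 1) ^ 2)
    (fun r _ => hW.dvd_five_of_dvd_five_mul_sq)
    (fun r _ hr => hW.dvd_five_of_dvd_five_mul_sq (by convert hr using 1; ring))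
    (((dvd_pow_self π two_ne_zero).mul_left _).mul_right _) hμ0
  simp only [map_sub, map_mul, map_pow, map_neg, map_ofNat, map_one, hW.algebraMap_eq,
    mul_assoc (4 ^ j * π ^ 2) τ] at this
  obtain ⟨v, hv, hhalf⟩ := this (by convert hsq using 1; ring)
  exact ⟨τ * v, hv, by rw [mul_assoc, hhalf]⟩

/- Halving preserves the shape `4 ^ (j + 1) π² τ` of an abscissa and lowers `j`; at `j = 0` the half
is so well determined that a negative unit times it would have to be a square. -/
lemma not_isAbscissa (hW : IsDyadicLocalization α π) (j : ℕ) {τ : W} (hτ : π ^ 9 ∣ τ - 1) :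
    ¬ IsAbscissa (-5 * (π - 1)) (5 * (π - 1) ^ 2) (4 ^ (j + 1) * π ^ 2 * τ) := by
  intro hsq
  have hπ := hW.isDyadicUniformizer
  induction j generalizing τ with
  | zero =>
    obtain ⟨κ, hκ, hhalf⟩ := hW.exists_half 0 ((dvd_pow_self π (by norm_num)).trans hτ) hsq
    rw [pow_zero, one_mul] at hκ hhalf
    exact hW.not_isAbscissa_of_half hτ hhalf hκ
  | succ j ih =>
    obtain ⟨κ, hκ, hhalf⟩ :=
      hW.exists_half (j + 1) ((dvd_pow_self π (by norm_num)).trans hτ) hsq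
    have hX : π ^ 9 ∣ 4 ^ (j + 1) * π ^ 2 * κ := by
      refine (pow_dvd_pow π (by norm_num : 9 ≤ 2 * 5 + 1)).trans ?_
      convert hπ.pow_dvd_four_mul (x := 4 ^ j * π ^ 2 * κ)
        (((dvd_pow_self π two_ne_zero).mul_left _).mul_right _) using 1
      ring
    exact ih (dvd_sub_one_of_half hX hτ hhalf) hκ

end IsDyadicLocalization

section QuarticForm

/-- The cofactor of `u - v` in `u ^ 5 - v ^ 5`. -/
def quarticForm {R : Type*} [CommRing R] (u v : R) : R :=
  u ^ 4 + u ^ 3 * v + u ^ 2 * v ^ 2 + u * v ^ 3 + v ^ 4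

variable {R : Type*} [CommRing R]

lemma sub_mul_quarticForm (u v : R) : (u - v) * quarticForm u v = u ^ 5 - v ^ 5 := by
  rw [quarticForm]
  ring

lemma map_quarticForm {S : Type*} [CommRing S] (φ : R →+* S) (u v : R) :
    φ (quarticForm u v) = quarticForm (φ u) (φ v) := by
  simp only [quarticForm, map_add, map_mul, map_pow]

lemma dvd_quarticForm_sub_quarticForm {m u u' v v' : R} (hu : m ∣ u - u') (hv : m ∣ v - v') :
    m ∣ quarticForm u v - quarticForm u' v' := by
  simp only [← Ideal.mem_span_singleton, ← Ideal.Quotient.eq] at hu hv ⊢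
  rw [map_quarticForm, map_quarticForm, hu, hv]

lemma prime_dvd_five_of_dvd_sub_of_dvd_quarticForm {u v r : R} (huv : IsCoprime u v)
    (hr : Prime r) (hsub : r ∣ u - v) (h : r ∣ quarticForm u v) : r ∣ 5 := by
  have hform : r ∣ 5 * v ^ 4 := by
    convert h.sub (hsub.mul_right (u ^ 3 + 2 * u ^ 2 * v + 3 * u * v ^ 2 + 4 * v ^ 3)) using 1
    rw [quarticForm]
    ring
  refine (hr.dvd_or_dvd hform).resolve_right fun hv => ?_
  replace hv := hr.dvd_of_dvd_pow hv
  exact hr.not_isUnit (huv.isUnit_of_dvd' ((dvd_sub_left hv).1 hsub) hv)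

end QuarticForm

section Abscissa

variable {W : Type*} [CommRing W] {π : W}

lemma dvd_sub_one_of_mul_eq_one {m x i : W} (hx : m ∣ x - 1) (h : x * i = 1) : m ∣ i - 1 := by
  convert hx.mul_left (-i) using 1
  linear_combination h

lemma isAbscissa_of_isSquare_mul {a b r M i : W} (hi : M * i = 1)
    (h : IsSquare (M * (M ^ 2 + a * r ^ 2 * M + b * r ^ 4))) : IsAbscissa a b (r ^ 2 * i) := by
  obtain ⟨N, hN⟩ := h
  refine ⟨r * i ^ 2 * N, ?_⟩
  rw [quadFactor]
  linear_combination r ^ 2 * i ^ 4 * hN - r ^ 2 * i * (M * i * (M * i + 1) + 1 +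
    a * r ^ 2 * i * (M * i + 1) + b * r ^ 4 * i ^ 2) * hi

/-- The polynomial `((π - 1) (s⁴ + s³ + s² + s + 1) - 1) / 4` in `ς`, where `s = π + 4 ς` and
`π ^ 5 = 2`. -/
def quarticTail (π ς : W) : W :=
  (π - 1) * ((4 * π ^ 3 + 3 * π ^ 2 + 2 * π + 1) * ς + 4 * (6 * π ^ 2 + 3 * π + 1) * ς ^ 2 +
    16 * (4 * π + 1) * ς ^ 3 + 64 * ς ^ 4)

/-- The quartic `y² = (π - 1) (s⁴ + s³ + s² + s + 1)` has the point `(s, y) = (π, 1)`, which turns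
it into an elliptic curve in Weierstrass form. For `s = π + 4 ς` and `y = 1 + 2 ε` the abscissa is
`weierstrassNum π ς ε / (2 ς) ^ 2`. -/
def weierstrassNum (π ς ε : W) : W :=
  1 + ε + (π - 1) * ((4 * π ^ 3 + 3 * π ^ 2 + 2 * π + 1) * ς + 4 * (2 * π ^ 2 + π + 2) * ς ^ 2)

lemma sub_one_mul_quarticForm (hπ : π ^ 5 = 2) (ς : W) :
    (π - 1) * quarticForm (π + 4 * ς) 1 = 1 + 4 * quarticTail π ς := by
  rw [quarticForm, quarticTail]
  linear_combination hπ

lemma isSquare_weierstrassNum_mul (hπ : π ^ 5 = 2) {ς ε : W} (hε : ε ^ 2 + ε = quarticTail π ς) :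
    IsSquare (weierstrassNum π ς ε * (weierstrassNum π ς ε ^ 2 +
      -5 * (π - 1) * (2 * ς) ^ 2 * weierstrassNum π ς ε + 5 * (π - 1) ^ 2 * (2 * ς) ^ 4)) := by
  set d₁ := (π - 1) * (4 * π ^ 3 + 3 * π ^ 2 + 2 * π + 1) with hd₁
  set e := (π - 1) * (2 * π ^ 2 + π + 2) with he
  refine ⟨1 + ε + d₁ * ς + (4 * ((π - 1) * (6 * π ^ 2 + 3 * π + 1)) - d₁ ^ 2) * ς ^ 2 +
    d₁ * ς * weierstrassNum π ς ε + (8 * ((π - 1) * (4 * π + 1)) - 4 * d₁ * e) * ς ^ 3, ?_⟩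
  rw [hd₁, he]
  rw [quarticTail] at hε
  rw [weierstrassNum]
  linear_combination (1 - ς - ς * π - ς * π ^ 2 - ς * π ^ 3 + 4 * ς * π ^ 4 -
    5 * ς ^ 2 - 10 * ς ^ 2 * π - 15 * ς ^ 2 * π ^ 2 + 20 * ς ^ 2 * π ^ 3 + 5 * ς ^ 2 * π ^ 4 +
    6 * ς ^ 2 * π ^ 5 + 7 * ς ^ 2 * π ^ 6 + 8 * ς ^ 2 * π ^ 7 - 16 * ς ^ 2 * π ^ 8 + ε) * hε +
    (64 * ς ^ 4 - 64 * ς ^ 4 * π - 64 * ς ^ 5 + 320 * ς ^ 5 * π ^ 4 -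
    256 * ς ^ 5 * π ^ 5 - 192 * ς ^ 6 + 128 * ς ^ 6 * π - 192 * ς ^ 6 * π ^ 2 +
    768 * ς ^ 6 * π ^ 3 - 512 * ς ^ 6 * π ^ 4 + 64 * ε * ς ^ 4 - 64 * ε * ς ^ 4 * π) * hπ

namespace IsDyadicUniformizer

variable [IsLocalRing W]

lemma pow_dvd_weierstrassNum_sub_one (hπ : IsDyadicUniformizer π 5) {ς ε : W} (hς : π ^ 6 ∣ ς)
    (hπε : π ∣ ε) (hε : ε ^ 2 + ε = quarticTail π ς) :
    π ^ 9 ∣ weierstrassNum π ς ε - 1 := by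
  have hunit : IsUnit (1 + ε) := hπ.isUnit_of_dvd_sub_one (by simpa using hπε)
  have hςε : ς ∣ ε := by
    refine hunit.dvd_mul_left.1 ⟨(π - 1) * ((4 * π ^ 3 + 3 * π ^ 2 + 2 * π + 1) +
      4 * (6 * π ^ 2 + 3 * π + 1) * ς + 16 * (4 * π + 1) * ς ^ 2 + 64 * ς ^ 3), ?_⟩
    rw [quarticTail] at hε
    linear_combination hε
  obtain ⟨k, rfl⟩ := hςε
  have h2ς : π ^ 9 ∣ 2 * ς := by
    rw [← hπ.pow_eq_two]
    exact (pow_dvd_pow π (by norm_num : 9 ≤ 5 + 6)).trans (pow_add π 5 6 ▸ mul_dvd_mul_left _ hς)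
  have hςς : π ^ 9 ∣ ς ^ 2 :=
    (pow_dvd_pow π (by norm_num : 9 ≤ 6 * 2)).trans (pow_mul π 6 2 ▸ pow_dvd_pow_of_dvd hς 2)
  rw [quarticTail] at hε
  rw [weierstrassNum]
  convert (h2ς.mul_right ((π - 1) * ((4 * π ^ 3 + 3 * π ^ 2 + 2 * π + 1) +
    2 * (6 * π ^ 2 + 3 * π + 1 + (2 * π ^ 2 + π + 2)) * ς + 8 * (4 * π + 1) * ς ^ 2 +
      32 * ς ^ 3))).sub (hςς.mul_right (k ^ 2)) using 1
  linear_combination hε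

variable [CharZero W] [IsDomain W]

lemma exists_weierstrassNum (hπ : IsDyadicUniformizer π 5) {ς : W} (hς : π ^ 6 ∣ ς)
    (hsq : IsSquare ((π - 1) * quarticForm (π + 4 * ς) 1)) :
    ∃ ε, π ^ 9 ∣ weierstrassNum π ς ε - 1 ∧ ε ^ 2 + ε = quarticTail π ς := by
  obtain ⟨y, hy⟩ := hsq
  have hπς : π ∣ quarticTail π ς := by
    convert ((dvd_pow_self π (by norm_num)).trans hς).mul_right ((π - 1) *
      ((4 * π ^ 3 + 3 * π ^ 2 + 2 * π + 1) + 4 * (6 * π ^ 2 + 3 * π + 1) * ς +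
        16 * (4 * π + 1) * ς ^ 2 + 64 * ς ^ 3)) using 1
    rw [quarticTail]
    ring
  obtain ⟨ε, hπε, hε⟩ := hπ.exists_dvd_and_sq_add_mul_eq (y := y) (m := 1) hπς
    (by rw [sq, ← hy, sub_one_mul_quarticForm hπ.pow_eq_two, one_pow])
  rw [one_mul] at hε
  exact ⟨ε, hπ.pow_dvd_weierstrassNum_sub_one hς hπε hε, hε⟩

lemma exists_isAbscissa_of_isSquare_quarticForm (hπ : IsDyadicUniformizer π 5) {c d o : W} {j : ℕ}
    (hcd : c - d = 2 ^ (j + 3) * o) (ho : π ^ 9 ∣ o ^ 2 - 1) (hd : π ^ 9 ∣ d - 1)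
    (hsq : IsSquare ((π - 1) * quarticForm (π * c) d)) :
    ∃ τ, π ^ 9 ∣ τ - 1 ∧ IsAbscissa (-5 * (π - 1)) (5 * (π - 1) ^ 2) (4 ^ (j + 2) * π ^ 2 * τ) := by
  have isUnit_of_pow_dvd {x : W} (hx : π ^ 9 ∣ x - 1) : IsUnit x :=
    hπ.isUnit_of_dvd_sub_one ((dvd_pow_self π (by norm_num)).trans hx)
  obtain ⟨d', hd'⟩ := (isUnit_of_pow_dvd hd).exists_right_inv
  set ς := 2 ^ (j + 1) * π * o * d' with hς_def
  have hs : π * c * d' = π + 4 * ς := by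
    linear_combination π * d' * hcd + π * hd'
  have hς : π ^ 6 ∣ ς := ⟨2 ^ j * o * d', by
    linear_combination -2 ^ j * π * o * d' * hπ.pow_eq_two⟩
  have hform : (π - 1) * quarticForm (π + 4 * ς) 1 =
      (d' ^ 2) ^ 2 * ((π - 1) * quarticForm (π * c) d) := by
    rw [← hs, ← hd', quarticForm, quarticForm]
    ring
  obtain ⟨ε, hM, hε⟩ := hπ.exists_weierstrassNum hς (hform ▸ (IsSquare.sq _).mul hsq)
  obtain ⟨i, hi⟩ := (isUnit_of_pow_dvd hM).exists_right_inv
  refine ⟨o ^ 2 * d' ^ 2 * i, ?_, ?_⟩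
  · have mul_sub_one {x y : W} (hx : π ^ 9 ∣ x - 1) (hy : π ^ 9 ∣ y - 1) : π ^ 9 ∣ x * y - 1 := by
      simpa using dvd_mul_sub_mul hx hy
    have hd'_one := dvd_sub_one_of_mul_eq_one hd hd'
    rw [sq d']
    exact mul_sub_one (mul_sub_one ho (mul_sub_one hd'_one hd'_one))
      (dvd_sub_one_of_mul_eq_one hM hi)
  · convert isAbscissa_of_isSquare_mul hi (isSquare_weierstrassNum_mul hπ.pow_eq_two hε) using 1
    rw [hς_def, show (4 : W) = 2 ^ 2 by norm_num, ← pow_mul]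
    ring

end IsDyadicUniformizer

end Abscissa

section Localization

lemma IsDyadicUniformizer.algebraMap_of_atPrime {R : Type*} [CommRing R] {π : R} {e : ℕ}
    (hπ : IsDyadicUniformizer π e) (W : Type*) [CommRing W] [Algebra R W]
    [(Ideal.span {π}).IsPrime] [IsLocalization.AtPrime W (Ideal.span {π})] :
    IsDyadicUniformizer (algebraMap R W π) e := by
  refine ⟨by rw [← map_pow, hπ.pow_eq_two, map_ofNat], ?_, fun x => ?_⟩
  · rw [IsLocalization.AtPrime.isUnit_to_map_iff W (Ideal.span {π})]
    exact fun h => h (Ideal.mem_span_singleton_self π)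
  · obtain ⟨⟨n, s⟩, hx⟩ := IsLocalization.surj (Ideal.span {π}).primeCompl x
    have hs_unit : IsUnit (algebraMap R W s) := IsLocalization.map_units W s
    have hs : π ∣ (s : R) - 1 := (hπ.dvd_or_dvd_sub_one s).resolve_left
      fun h => s.2 (Ideal.mem_span_singleton.2 h)
    rcases hπ.dvd_or_dvd_sub_one n with hn | hn
    · exact .inl (hs_unit.dvd_mul_right.1 (hx ▸ map_dvd _ hn))
    · refine .inr (hs_unit.dvd_mul_right.1 ?_)
      have := map_dvd (algebraMap R W) (dvd_sub hn hs)
      rwa [sub_sub_sub_cancel_right, map_sub, ← hx, ← sub_one_mul] at this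

lemma isDyadicLocalization_of_atPrime {K : Type*} [Field K] [NumberField K] {α : 𝓞 K}
    (hK : finrank ℚ K = 5) (hα : α ^ 5 = 2) (W : Type*) [CommRing W] [Algebra (𝓞 K) W]
    [(Ideal.span {α}).IsPrime] [IsLocalization.AtPrime W (Ideal.span {α})] :
    IsDyadicLocalization α (algebraMap (𝓞 K) W α) where
  finrank_eq_five := hK
  pow_eq_two := hα
  algebraMap_eq := rfl
  exists_isLocalization := 
    ⟨_, (Ideal.span {α}).primeCompl_le_nonZeroDivisors, inferInstance⟩
  isDyadicUniformizer := (isDyadicUniformizer_fifth_root hK hα).algebraMap_of_atPrime W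

end Localization

section PowerEquation

lemma pow_dvd_intCast_of_eight_dvd {R : Type*} [CommRing R] {π : R} (hπ : π ^ 5 = 2) {k : ℕ}
    (hk : k ≤ 15) {n : ℤ} (h : 8 ∣ n) : π ^ k ∣ (n : R) := by
  have hπ_pow : π ^ 15 = (8 : ℤ) := by
    rw [show 15 = 5 * 3 by rfl, pow_mul, hπ]
    norm_num
  exact (pow_dvd_pow π hk).trans (hπ_pow ▸ map_dvd (Int.castRingHom R) h)

namespace IsDyadicLocalization

variable {K : Type*} [Field K] [NumberField K] {α : 𝓞 K} {W : Type*} [CommRing W]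
  [Algebra (𝓞 K) W] [CharZero W] [IsDomain W] [IsLocalRing W] {π : W}

lemma isSquare_sub_one_mul_quarticForm (hW : IsDyadicLocalization α π) {c d x : ℤ}
    (hcd : IsCoprime c d) (hc : 8 ∣ c - 1) (hd : 8 ∣ d - 1) (h : x ^ 2 = 2 * c ^ 5 - d ^ 5) :
    IsSquare ((π - 1) * quarticForm (π * c) d) := by
  have hα := hW.pow_eq_two
  have hπ := hW.isDyadicUniformizer.pow_eq_two
  have hprod : ((α - 1) * quarticForm (α * c) d) * ((α - 1) * (α * c - d)) =
      ((α - 1) * x) ^ 2 := by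
    have h' : (x : 𝓞 K) ^ 2 = 2 * c ^ 5 - d ^ 5 := by exact_mod_cast h
    linear_combination (α - 1) ^ 2 * (sub_mul_quarticForm (α * c) (d : 𝓞 K) + c ^ 5 * hα - h')
  have hunit : IsUnit (α - 1) := by simpa using (isUnit_one_sub_fifth_root hα).neg
  have hx : x ≠ 0 := by
    rintro rfl
    have : Odd d := by rw [← Int.not_even_iff_odd, even_iff_two_dvd]; omega
    have := Even.sub_odd (even_two_mul (c ^ 5)) (this.pow (n := 5))
    rw [← h] at this
    exact absurd this (by decide)
  have hcop : IsCoprime (α * c) (d : 𝓞 K) := by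
    refine .mul_left ?_ (hcd.map (Int.castRingHom (𝓞 K)))
    obtain ⟨k, hk⟩ := hd
    have hk' : (d : 𝓞 K) - 1 = 8 * k := by exact_mod_cast congrArg (Int.cast : ℤ → 𝓞 K) hk
    exact ⟨-4 * k * α ^ 4, 1, by linear_combination hk' - 4 * k * hα⟩
  have hcongr : π ^ 11 ∣ algebraMap (𝓞 K) W ((α - 1) * quarticForm (α * c) d) - 1 ^ 2 := by
    have hcW : π ^ 11 ∣ π * c - π := by
      simpa [mul_sub] using (pow_dvd_intCast_of_eight_dvd hπ (by norm_num) hc).mul_left π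
    have hdW : π ^ 11 ∣ (d : W) - 1 := by
      simpa using pow_dvd_intCast_of_eight_dvd hπ (k := 11) (by norm_num) hd
    convert (dvd_quarticForm_sub_quarticForm hcW hdW).mul_left (π - 1) using 1
    rw [map_mul, map_quarticForm, map_sub, map_mul, map_intCast, map_intCast, map_one,
      hW.algebraMap_eq]
    linear_combination sub_mul_quarticForm π 1 + hπ
  have hsq : IsSquare ((α - 1) * quarticForm (α * c) d) := by
    refine hW.isSquare_of_pow_dvd_sub_sq isUnit_one ?_ (hprod ▸ IsSquare.sq _) ?_ hcongr
    · rw [hprod]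
      exact pow_ne_zero 2 (mul_ne_zero hunit.ne_zero (Int.cast_ne_zero.2 hx))
    · intro q hq hA hB
      exact prime_dvd_five_of_dvd_sub_of_dvd_quarticForm hcop hq (hunit.dvd_mul_left.1 hB)
        (hunit.dvd_mul_left.1 hA)
  simpa [map_quarticForm, hW.algebraMap_eq] using hsq.map (algebraMap (𝓞 K) W)

lemma eq_of_sq_eq_two_mul_pow_five_sub (hW : IsDyadicLocalization α π) {c d x : ℤ}
    (hcd : IsCoprime c d) (hc : 8 ∣ c - 1) (hd : 8 ∣ d - 1) (h : x ^ 2 = 2 * c ^ 5 - d ^ 5) :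
    c = d := by
  by_contra hne
  obtain ⟨m, hm⟩ : 8 ∣ c - d := by omega
  obtain ⟨j, o, ho, rfl⟩ := WfDvdMonoid.max_power_factor (a₀ := m) (x := (2 : ℤ))
    (by omega) Int.prime_two.irreducible
  have ho_odd : Odd o := by rwa [← Int.not_even_iff_odd, even_iff_two_dvd]
  have hcd_eq : (c : W) - d = 2 ^ (j + 3) * o := by
    have : (c : W) - d = 8 * (2 ^ j * o) := by exact_mod_cast congrArg (Int.cast : ℤ → W) hm
    rw [this, pow_add]
    ring
  have pow_dvd {n : ℤ} (hn : 8 ∣ n) : π ^ 9 ∣ (n : W) :=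
    pow_dvd_intCast_of_eight_dvd hW.isDyadicUniformizer.pow_eq_two (by norm_num) hn
  obtain ⟨τ, hτ, hX⟩ := hW.isDyadicUniformizer.exists_isAbscissa_of_isSquare_quarticForm hcd_eq
    (by simpa using pow_dvd (Int.eight_dvd_sq_sub_one_of_odd ho_odd)) (by simpa using pow_dvd hd)
    (hW.isSquare_sub_one_mul_quarticForm hcd hc hd h)
  exact hW.not_isAbscissa (j + 1) hτ hX

end IsDyadicLocalization

lemma eq_of_sq_eq_two_mul_pow_five_sub {c d x : ℤ} (hcd : IsCoprime c d) (hc : 8 ∣ c - 1)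
    (hd : 8 ∣ d - 1) (h : x ^ 2 = 2 * c ^ 5 - d ^ 5) : c = d := by
  obtain ⟨K, _, _, α, hK, hα⟩ := exists_numberField_pow_eq Nat.prime_five rat_pow_five_ne_two
  have hα : α ^ 5 = 2 := by simpa using hα
  have hprime := (isDyadicUniformizer_fifth_root hK hα).prime
  have : (Ideal.span {α}).IsPrime := (Ideal.span_singleton_prime hprime.ne_zero).2 hprime
  have hinj := IsLocalization.injective (Localization.AtPrime (Ideal.span {α}))
    (Ideal.span {α}).primeCompl_le_nonZeroDivisors
  have := IsLocalization.isDomain_of_atPrime (Localization.AtPrime (Ideal.span {α}))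
    (Ideal.span {α})
  have := charZero_of_injective_algebraMap hinj
  exact (isDyadicLocalization_of_atPrime hK hα
    (Localization.AtPrime (Ideal.span {α}))).eq_of_sq_eq_two_mul_pow_five_sub hcd hc hd h

end PowerEquation

section Congruences

lemma eq_one_of_sq_eq_zmod_eight : ∀ x₁ x₂ c d : ZMod 8, (4 * x₁ ≠ 0 ∨ 4 * x₂ ≠ 0) →
    x₂ ^ 2 = 2 * c ^ 5 - d ^ 5 → x₁ ^ 2 = 3 * c ^ 5 - 2 * d ^ 5 → c = 1 ∧ d = 1 := by
  decide +kernel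

lemma eight_dvd_sub_one_of_sq_eq {x₁ x₂ c d : ℤ} (hx : IsCoprime x₁ x₂)
    (h₂ : x₂ ^ 2 = 2 * c ^ 5 - d ^ 5) (h₁ : x₁ ^ 2 = 3 * c ^ 5 - 2 * d ^ 5) :
    8 ∣ c - 1 ∧ 8 ∣ d - 1 := by
  have two_dvd (x : ℤ) (h : 4 * (x : ZMod 8) = 0) : 2 ∣ x := by
    have : 8 ∣ 4 * x := (ZMod.intCast_zmod_eq_zero_iff_dvd (4 * x) 8).1 (by push_cast; exact h)
    omega
  have hodd : 4 * (x₁ : ZMod 8) ≠ 0 ∨ 4 * (x₂ : ZMod 8) ≠ 0 := by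
    by_contra! h
    exact absurd (hx.isUnit_of_dvd' (two_dvd _ h.1) (two_dvd _ h.2)) (by decide)
  obtain ⟨hc, hd⟩ := eq_one_of_sq_eq_zmod_eight x₁ x₂ c d hodd
    (by exact_mod_cast congrArg (Int.cast : ℤ → ZMod 8) h₂)
    (by exact_mod_cast congrArg (Int.cast : ℤ → ZMod 8) h₁)
  have eight_dvd {n : ℤ} (h : (n : ZMod 8) = 1) : 8 ∣ n - 1 := by
    exact_mod_cast (ZMod.intCast_zmod_eq_zero_iff_dvd _ 8).1 (by push_cast; rw [h, sub_self])
  exact ⟨eight_dvd hc, eight_dvd hd⟩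

end Congruences

/-- There is no primitive non-constant arithmetic progression of integers of the
form `x₁², x₂², x₃⁵, x₄⁵`. -/
theorem no_AP_2255 :
    ¬ ∃ (x₁ x₂ x₃ x₄ d : ℤ), d ≠ 0 ∧
      Int.gcd (x₁ ^ 2) (x₂ ^ 2) = 1 ∧
      x₂ ^ 2 - x₁ ^ 2 = d ∧
      x₃ ^ 5 - x₂ ^ 2 = d ∧
      x₄ ^ 5 - x₃ ^ 5 = d := by
  rintro ⟨x₁, x₂, x₃, x₄, d, hd, hgcd, h₁, h₂, h₃⟩
  have hx₂ : x₂ ^ 2 = 2 * x₃ ^ 5 - x₄ ^ 5 := by linarith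
  have hx₁ : x₁ ^ 2 = 3 * x₃ ^ 5 - 2 * x₄ ^ 5 := by linarith
  have hcop : IsCoprime (x₁ ^ 2) (x₂ ^ 2) := Int.isCoprime_iff_gcd_eq_one.2 hgcd
  obtain ⟨hc₃, hc₄⟩ :=
    eight_dvd_sub_one_of_sq_eq ((IsCoprime.pow_iff two_pos two_pos).1 hcop) hx₂ hx₁
  have hcop' : IsCoprime x₃ x₄ := by
    obtain ⟨u, v, huv⟩ := hcop
    exact ⟨x₃ ^ 4 * (3 * u + 2 * v), -x₄ ^ 4 * (2 * u + v), by
      linear_combination huv - u * hx₁ - v * hx₂⟩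
  have heq : x₃ = x₄ := eq_of_sq_eq_two_mul_pow_five_sub hcop' hc₃ hc₄ hx₂
  exact hd (by rw [← h₃, heq, sub_self])
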